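/- Let n ≥ 2, let Ω, Ω̃ ⊆ ℝⁿ be bounded, uniformly convex open domains with smooth boundary with defining functions h̃ and h respectively, and suppose the closure of Ω̃ is contained in the open unit ball B₁(0). Then there exists a constant C₃₀ > 0, depending only on Ω and Ω̃, such that for every strictly convex solution (u, c) of the second boundary value problem for the Lorentz mean curvature operator on (Ω, Ω̃), with Legendre transform ũ, one has: for every y ∈ ∂Ω̃ and every unit vector ς ∈ ℝⁿ tangential to ∂Ω̃ at y (i.e., ⟨ς, ∇h(y)⟩ = 0 and |ς| = 1), ⟨ς, D²ũ(y) ς⟩ ≤ C₃₀. -/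

import Mathlib

noncomputable section
open MeasureTheory
open scoped RealInnerProductSpace

/-- The `i`-th standard basis vector of `ℝⁿ`. -/
def ev (n : ℕ) (i : Fin n) : EuclideanSpace ℝ (Fin n) := EuclideanSpace.single i 1

/-- Lorentz mean curvature operator `M[u] x = ∑ i, ∂ᵢ (∂ᵢ u / √(1 - |∇u|²)) x`. -/
def MOp (n : ℕ) (u : EuclideanSpace ℝ (Fin n) → ℝ) (x : EuclideanSpace ℝ (Fin n)) : ℝ :=
  ∑ i : Fin n,
    fderiv ℝ (fun y => fderiv ℝ u y (ev n i) / Real.sqrt (1 - ‖gradient u y‖ ^ 2)) x (ev n i)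

/-- Euclidean mean curvature operator `E[u] x = ∑ i, ∂ᵢ (∂ᵢ u / √(1 + |∇u|²)) x`. -/
def EOp (n : ℕ) (u : EuclideanSpace ℝ (Fin n) → ℝ) (x : EuclideanSpace ℝ (Fin n)) : ℝ :=
  ∑ i : Fin n,
    fderiv ℝ (fun y => fderiv ℝ u y (ev n i) / Real.sqrt (1 + ‖gradient u y‖ ^ 2)) x (ev n i)

/-- `Ω` is a uniformly convex domain with smooth boundary, exhibited by the defining
function `h` with uniform concavity constant `θ`:  `h` is smooth, `Ω = {h > 0}`,
`|∇h| = 1` on `∂Ω`, and `⟨ξ, D²h(p) ξ⟩ ≤ -θ |ξ|²` for all `p, ξ`. -/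
def IsUnifConvexDefFn (n : ℕ) (Ω : Set (EuclideanSpace ℝ (Fin n)))
    (h : EuclideanSpace ℝ (Fin n) → ℝ) (θ : ℝ) : Prop :=
  ContDiff ℝ (⊤ : ℕ∞) h ∧ Ω = {p | 0 < h p} ∧
  (∀ p ∈ frontier Ω, ‖gradient h p‖ = 1) ∧ 0 < θ ∧
  ∀ p ξ : EuclideanSpace ℝ (Fin n), ⟪ξ, fderiv ℝ (gradient h) p ξ⟫ ≤ -θ * ‖ξ‖ ^ 2

/-- `u` is smooth on the closure of `Ω` (i.e. on an open neighbourhood of it). -/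
def SmoothOnClosure (n : ℕ) (Ω : Set (EuclideanSpace ℝ (Fin n)))
    (u : EuclideanSpace ℝ (Fin n) → ℝ) : Prop :=
  ∃ U : Set (EuclideanSpace ℝ (Fin n)), IsOpen U ∧ closure Ω ⊆ U ∧ ContDiffOn ℝ (⊤ : ℕ∞) u U

/-- `(u, c)` is a strictly convex solution of the second boundary value problem for the
Lorentz mean curvature operator on `(Ω, Ω')`: `u` is smooth up to the boundary, spacelike
(`|∇u| < 1`), has positive definite Hessian `D²u` on the closure of `Ω`, its gradient map
is a bijection from `Ω` onto `Ω'`, and `M[u] = c` on `Ω`. -/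
def IsSol (n : ℕ) (Ω Ω' : Set (EuclideanSpace ℝ (Fin n)))
    (u : EuclideanSpace ℝ (Fin n) → ℝ) (c : ℝ) : Prop :=
  SmoothOnClosure n Ω u ∧
  (∀ x ∈ closure Ω, ‖gradient u x‖ < 1) ∧
  (∀ x ∈ closure Ω, ∀ ξ : EuclideanSpace ℝ (Fin n), ξ ≠ 0 →
      0 < ⟪ξ, fderiv ℝ (gradient u) x ξ⟫) ∧
  Set.BijOn (gradient u) Ω Ω' ∧
  (∀ x ∈ Ω, MOp n u x = c)

/-- `(u, c)` is a strictly convex solution of the second boundary value problem for the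
Euclidean mean curvature operator on `(Ω, Ω')`. -/
def IsSolE (n : ℕ) (Ω Ω' : Set (EuclideanSpace ℝ (Fin n)))
    (u : EuclideanSpace ℝ (Fin n) → ℝ) (c : ℝ) : Prop :=
  SmoothOnClosure n Ω u ∧
  (∀ x ∈ closure Ω, ∀ ξ : EuclideanSpace ℝ (Fin n), ξ ≠ 0 →
      0 < ⟪ξ, fderiv ℝ (gradient u) x ξ⟫) ∧
  Set.BijOn (gradient u) Ω Ω' ∧
  (∀ x ∈ Ω, EOp n u x = c)

/-- `ut` is the Legendre transform of `u`: it is smooth up to the boundary of `Ω'`,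
satisfies `ut (∇u x) = ⟨x, ∇u x⟩ - u x` and `∇ut (∇u x) = x` for `x ∈ Ω`. -/
def IsLegendre (n : ℕ) (Ω Ω' : Set (EuclideanSpace ℝ (Fin n)))
    (u ut : EuclideanSpace ℝ (Fin n) → ℝ) : Prop :=
  SmoothOnClosure n Ω' ut ∧
  (∀ x ∈ Ω, ut (gradient u x) = ⟪x, gradient u x⟫ - u x) ∧
  (∀ x ∈ Ω, gradient ut (gradient u x) = x)

/-- The coefficient matrix `s_ij(p) = (δ_ij + pᵢpⱼ/(1 - |p|²)) / √(1 - |p|²)` of the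
Lorentz mean curvature operator written in nondivergence form. -/
def sMat (n : ℕ) (p : EuclideanSpace ℝ (Fin n)) (i j : Fin n) : ℝ :=
  ((if i = j then (1 : ℝ) else 0) + p i * p j / (1 - ‖p‖ ^ 2)) / Real.sqrt (1 - ‖p‖ ^ 2)

/-- `Ω` has smooth boundary: it is the superlevel set of a smooth function whose
gradient does not vanish on the boundary. -/
def HasSmoothBoundary (n : ℕ) (Ω : Set (EuclideanSpace ℝ (Fin n))) : Prop :=
  ∃ g : EuclideanSpace ℝ (Fin n) → ℝ, ContDiff ℝ (⊤ : ℕ∞) g ∧ Ω = {p | 0 < g p} ∧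
    ∀ p ∈ frontier Ω, gradient g p ≠ 0

/-- `B(p) = Iₙ + p pᵀ / (v (1 + v))`, `v = √(1 - |p|²)`: the positive square root of the
inverse induced metric of a spacelike graph with gradient `p`. -/
def sqB (n : ℕ) (p : EuclideanSpace ℝ (Fin n)) : Matrix (Fin n) (Fin n) ℝ :=
  1 + (Real.sqrt (1 - ‖p‖ ^ 2) * (1 + Real.sqrt (1 - ‖p‖ ^ 2)))⁻¹ •
      Matrix.of fun i j => p i * p j

/-- `B'(p) = Iₙ - p pᵀ / (1 + v)`, `v = √(1 - |p|²)`: the square root of the induced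
metric of a spacelike graph with gradient `p`. -/
def sqBinv (n : ℕ) (p : EuclideanSpace ℝ (Fin n)) : Matrix (Fin n) (Fin n) ℝ :=
  1 - (1 + Real.sqrt (1 - ‖p‖ ^ 2))⁻¹ • Matrix.of fun i j => p i * p j

/-! The Legendre transform `f = ũ` satisfies `∑ₖ ⟪rₖ, (D²f)⁻¹ rₖ⟫ = c` on `Ω'`, where the vectors
`rₖ` form a square root of the Lorentz coefficient matrix. Duality for quadratic forms gives
`c + ∑ₖ ⟪Qₖ, D²f Qₖ⟫ ≥ 2 ∑ₖ ⟪rₖ, Qₖ⟫` for all vectors `Qₖ`, with equality at `Pₖ = (D²f)⁻¹ rₖ`.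
Freezing `Q = P` at a point and testing this minimum to second order gives control of the
derivatives of `f` under the operator `L = ∑ₖ ∂_{Pₖ}∂_{Pₖ}`, whose coefficients satisfy
`∑ₖ |Pₖ|² ≤ c²`.

Let `M` be the maximum of `⟪ς, D²f ς⟫` over unit tangents, attained at `(y, e)`, and let
`β = ∇g(∇f)` be the normal of `Ω` at the image point. Since `g ∘ ∇f` vanishes on `∂Ω'`, the vector
`D²f β` is normal to `∂Ω'`, and barriers bound it and make `β` uniformly oblique. Splitting an
arbitrary direction along `β` and the tangent space, `∂ₑ∂ₑf` plus a correction of size `M` is at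
most `M` on all of `∂Ω'`, with equality at `y`; the barrier `N M h` then gives `∂_β ∂ₑ∂ₑf ≤ X M`
at `y`. Differentiating `g ∘ ∇f = 0` twice along `∂Ω'` bounds `|D²f e|² ≥ M²` by a multiple of
`∂_β ∂ₑ∂ₑf` plus a constant, so `M² ≤ C M`. -/

namespace LorentzDual

open Filter Topology Set
open scoped ContDiff Gradient

/-- The derivative of `q` in the direction `v`, as a function of the base point, so that
directional derivatives can be iterated. -/
def dirDeriv {E F : Type*} [NormedAddCommGroup E] [NormedSpace ℝ E] [NormedAddCommGroup F]
    [NormedSpace ℝ F] (v : E) (q : E → F) : E → F :=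
  fun z => fderiv ℝ q z v

local notation "∂[" v "]" => dirDeriv v

section DirectionalDerivatives

variable {E F G : Type*} [NormedAddCommGroup E] [NormedSpace ℝ E]
  [NormedAddCommGroup F] [NormedSpace ℝ F] [NormedAddCommGroup G] [NormedSpace ℝ G]

lemma contDiffAt_dirDeriv {m n : WithTop ℕ∞} {q : E → F} {y : E} (hq : ContDiffAt ℝ n q y)
    (hmn : m + 1 ≤ n) (v : E) : ContDiffAt ℝ m (∂[v] q) y :=
  (hq.fderiv_right hmn).clm_apply contDiffAt_const

lemma dirDeriv_dirDeriv {q : E → F} {y : E} (hq : ContDiffAt ℝ 2 q y) (v w : E) :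
    ∂[v] (∂[w] q) y = fderiv ℝ (fderiv ℝ q) y v w := by
  have hd : DifferentiableAt ℝ (fderiv ℝ q) y :=
    (hq.fderiv_right (m := 1) one_add_one_eq_two.le).differentiableAt one_ne_zero
  unfold dirDeriv
  rw [fderiv_clm_apply hd (differentiableAt_const w)]
  simp

lemma dirDeriv_comm {q : E → F} {y : E} (hq : ContDiffAt ℝ 2 q y) (v w : E) :
    ∂[v] (∂[w] q) y = ∂[w] (∂[v] q) y := by
  rw [dirDeriv_dirDeriv hq, dirDeriv_dirDeriv hq]
  exact hq.isSymmSndFDerivAt (by simp) v w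

lemma dirDeriv_congr {p q : E → F} {y : E} (h : p =ᶠ[𝓝 y] q) (v : E) :
    ∂[v] p =ᶠ[𝓝 y] ∂[v] q :=
  h.fderiv.fun_comp (· v)

lemma dirDeriv_dirDeriv_dirDeriv_rotate {q : E → F} {y : E} (hq : ContDiffAt ℝ 3 q y)
    (u v w : E) : ∂[u] (∂[v] (∂[w] q)) y = ∂[v] (∂[w] (∂[u] q)) y := by
  have hev : ∂[u] (∂[w] q) =ᶠ[𝓝 y] ∂[w] (∂[u] q) :=
    (hq.eventually (by simp)).mono fun z hz => dirDeriv_comm (hz.of_le (by norm_num)) u w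
  rw [dirDeriv_comm (contDiffAt_dirDeriv hq two_add_one_eq_three.le w) u v,
    (dirDeriv_congr hev v).self_of_nhds]

lemma dirDeriv_add_const_mul {p q : E → ℝ} {y : E} (hp : DifferentiableAt ℝ p y)
    (hq : DifferentiableAt ℝ q y) (a : ℝ) (v : E) :
    ∂[v] (fun z => p z + a * q z) y = ∂[v] p y + a * ∂[v] q y := by
  unfold dirDeriv
  rw [fderiv_fun_add hp (hq.const_mul a), fderiv_const_mul hq]
  rfl

lemma dirDeriv_dirDeriv_add_const_mul {p q : E → ℝ} {y : E} (hp : ContDiffAt ℝ 2 p y)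
    (hq : ContDiffAt ℝ 2 q y) (a : ℝ) (v w : E) :
    ∂[v] (∂[w] (fun z => p z + a * q z)) y = ∂[v] (∂[w] p) y + a * ∂[v] (∂[w] q) y := by
  have hev : ∂[w] (fun z => p z + a * q z) =ᶠ[𝓝 y] fun z => ∂[w] p z + a * ∂[w] q z := by
    filter_upwards [hp.eventually (by simp), hq.eventually (by simp)] with z hpz hqz
    exact dirDeriv_add_const_mul (hpz.differentiableAt two_ne_zero)
      (hqz.differentiableAt two_ne_zero) a w
  rw [(dirDeriv_congr hev v).self_of_nhds]
  exact dirDeriv_add_const_mul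
    ((contDiffAt_dirDeriv hp one_add_one_eq_two.le w).differentiableAt one_ne_zero)
    ((contDiffAt_dirDeriv hq one_add_one_eq_two.le w).differentiableAt one_ne_zero) a v

lemma dirDeriv_comp {Φ : F → G} {γ : E → F} {y : E} (hΦ : DifferentiableAt ℝ Φ (γ y))
    (hγ : DifferentiableAt ℝ γ y) (v : E) :
    ∂[v] (fun z => Φ (γ z)) y = ∂[∂[v] γ y] Φ (γ y) := by
  unfold dirDeriv
  rw [fderiv_fun_comp y hΦ hγ]
  rfl

lemma dirDeriv_dirDeriv_comp {Φ : F → G} {γ : E → F} {y : E} (hΦ : ContDiffAt ℝ 2 Φ (γ y))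
    (hγ : ContDiffAt ℝ 2 γ y) (v : E) :
    ∂[v] (∂[v] (fun z => Φ (γ z))) y =
      fderiv ℝ (fderiv ℝ Φ) (γ y) (∂[v] γ y) (∂[v] γ y) + fderiv ℝ Φ (γ y) (∂[v] (∂[v] γ) y) := by
  have hev : ∂[v] (fun z => Φ (γ z)) =ᶠ[𝓝 y] fun z => fderiv ℝ Φ (γ z) (∂[v] γ z) := by
    filter_upwards [hγ.continuousAt.eventually (hΦ.eventually (by simp)),
      hγ.eventually (by simp)] with z hΦz hγz
    exact dirDeriv_comp (hΦz.differentiableAt two_ne_zero) (hγz.differentiableAt two_ne_zero) v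
  have hΦ' : DifferentiableAt ℝ (fderiv ℝ Φ) (γ y) :=
    (hΦ.fderiv_right (m := 1) one_add_one_eq_two.le).differentiableAt one_ne_zero
  have hγ₀ : DifferentiableAt ℝ γ y := hγ.differentiableAt two_ne_zero
  have hγ' : DifferentiableAt ℝ (∂[v] γ) y :=
    (contDiffAt_dirDeriv hγ one_add_one_eq_two.le v).differentiableAt one_ne_zero
  rw [(dirDeriv_congr hev v).self_of_nhds]
  change fderiv ℝ (fun z => fderiv ℝ Φ (γ z) (∂[v] γ z)) y v = _
  have hcomp : DifferentiableAt ℝ (fun z => fderiv ℝ Φ (γ z)) y := hΦ'.comp y hγ₀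
  rw [fderiv_clm_apply hcomp hγ', fderiv_fun_comp y hΦ' hγ₀]
  simp [dirDeriv, add_comm]

end DirectionalDerivatives

section SecondDerivativeTests

variable {E : Type*} [NormedAddCommGroup E] [NormedSpace ℝ E]

lemma deriv_deriv_nonneg_of_isLocalMin {φ : ℝ → ℝ} {t₀ : ℝ} (h : IsLocalMin φ t₀)
    (hc : ContinuousAt φ t₀) : 0 ≤ deriv (deriv φ) t₀ := by
  by_contra! hneg
  have hmax := isLocalMax_of_deriv_deriv_neg hneg h.deriv_eq_zero hc
  have hconst : φ =ᶠ[𝓝 t₀] fun _ => φ t₀ := by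
    filter_upwards [h, hmax] with t hle hge using le_antisymm hge hle
  have hderiv : deriv φ =ᶠ[𝓝 t₀] fun _ => 0 := by simpa using hconst.deriv
  simp [hderiv.deriv_eq] at hneg

lemma eventually_lt_of_deriv_deriv_pos {φ : ℝ → ℝ} {t₀ : ℝ}
    (hd : ∀ᶠ t in 𝓝 t₀, DifferentiableAt ℝ φ t) (h₁ : deriv φ t₀ = 0)
    (h₂ : 0 < deriv (deriv φ) t₀) : ∀ᶠ t in 𝓝[≠] t₀, φ t₀ < φ t := by
  set δ := deriv (deriv φ) t₀ / 4 with hδ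
  have hδ₀ : 0 < δ := by positivity
  have hsq (t : ℝ) : HasDerivAt (fun t => δ * (t - t₀) ^ 2) (δ * (2 * (t - t₀))) t := by
    simpa using (((hasDerivAt_id t).sub_const t₀).pow 2).const_mul δ
  have hderiv : deriv (fun t => φ t - δ * (t - t₀) ^ 2) =ᶠ[𝓝 t₀]
      fun t => deriv φ t - δ * (2 * (t - t₀)) := by
    filter_upwards [hd] with t ht using (ht.hasDerivAt.fun_sub (hsq t)).deriv
  have hderiv₂ : deriv (deriv (fun t => φ t - δ * (t - t₀) ^ 2)) t₀ = 2 * δ := by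
    have hlin : HasDerivAt (fun t : ℝ => δ * (2 * (t - t₀))) (δ * 2) t₀ := by
      simpa using (((hasDerivAt_id t₀).sub_const t₀).const_mul 2).const_mul δ
    rw [hderiv.deriv_eq,
      ((differentiableAt_of_deriv_ne_zero h₂.ne').hasDerivAt.fun_sub hlin).deriv]
    linarith
  have hmin : IsLocalMin (fun t => φ t - δ * (t - t₀) ^ 2) t₀ := by
    refine isLocalMin_of_deriv_deriv_pos (by rw [hderiv₂]; positivity) ?_ ?_
    · simp [hderiv.self_of_nhds, h₁]
    · exact hd.self_of_nhds.continuousAt.sub (by fun_prop)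
  filter_upwards [nhdsWithin_le_nhds hmin, self_mem_nhdsWithin] with t ht hne
  have : 0 < δ * (t - t₀) ^ 2 := mul_pos hδ₀ (pow_two_pos_of_ne_zero (sub_ne_zero.2 hne))
  simp only [sub_self] at ht
  linarith

/-- The parabola through `y` with velocity `e` and acceleration `2 • m`. Second-order tests at the
boundary of a domain need curves that bend into the domain. -/
def parabola (y e m : E) (t : ℝ) : E := y + t • e + t ^ 2 • m

lemma parabola_zero (y e m : E) : parabola y e m 0 = y := by simp [parabola]

lemma hasDerivAt_parabola (y e m : E) (t : ℝ) :
    HasDerivAt (parabola y e m) (e + (2 * t) • m) t := by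
  have hlin : HasDerivAt (fun t : ℝ => t • e) e t := by
    simpa using (hasDerivAt_id t).smul_const e
  have hsq : HasDerivAt (fun t : ℝ => t ^ 2 • m) ((2 * t) • m) t := by
    simpa using (hasDerivAt_pow 2 t).smul_const m
  exact (hlin.const_add y).fun_add hsq

lemma tendsto_parabola (y e m : E) : Tendsto (parabola y e m) (𝓝 0) (𝓝 y) := by
  simpa only [ContinuousAt, parabola_zero] using (hasDerivAt_parabola y e m 0).continuousAt

variable {q h : E → ℝ} {y : E}

lemma eventually_hasDerivAt_comp_parabola (hq : ContDiffAt ℝ 2 q y) (e m : E) :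
    ∀ᶠ t in 𝓝 (0 : ℝ), HasDerivAt (fun t => q (parabola y e m t))
      (fderiv ℝ q (parabola y e m t) (e + (2 * t) • m)) t := by
  filter_upwards [(tendsto_parabola y e m).eventually (hq.eventually (by simp))] with t ht
  exact (ht.differentiableAt two_ne_zero).hasFDerivAt.comp_hasDerivAt t
    (hasDerivAt_parabola y e m t)

lemma deriv_comp_parabola (hq : ContDiffAt ℝ 2 q y) (e m : E) :
    deriv (fun t => q (parabola y e m t)) 0 = ∂[e] q y := by
  simp [(eventually_hasDerivAt_comp_parabola hq e m).self_of_nhds.deriv, parabola_zero, dirDeriv]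

lemma deriv_deriv_comp_parabola (hq : ContDiffAt ℝ 2 q y) (e m : E) :
    deriv (deriv fun t => q (parabola y e m t)) 0 = ∂[e] (∂[e] q) y + 2 * ∂[m] q y := by
  have hev : deriv (fun t => q (parabola y e m t)) =ᶠ[𝓝 0]
      fun t => fderiv ℝ q (parabola y e m t) (e + (2 * t) • m) :=
    (eventually_hasDerivAt_comp_parabola hq e m).mono fun t ht => ht.deriv
  have hfderiv : HasFDerivAt (fderiv ℝ q) (fderiv ℝ (fderiv ℝ q) y) (parabola y e m 0) := by
    rw [parabola_zero]
    have := (hq.fderiv_right (m := 1) one_add_one_eq_two.le).differentiableAt one_ne_zero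
    exact this.hasFDerivAt
  have hvel : HasDerivAt (fun t : ℝ => e + (2 * t) • m) ((2 : ℝ) • m) 0 := by
    simpa using (((hasDerivAt_id (0 : ℝ)).const_mul 2).smul_const m).const_add e
  have hcomp : HasDerivAt (fun t => fderiv ℝ q (parabola y e m t))
      (fderiv ℝ (fderiv ℝ q) y (e + (2 * (0 : ℝ)) • m)) 0 :=
    hfderiv.comp_hasDerivAt 0 (hasDerivAt_parabola y e m 0)
  rw [hev.deriv_eq, (hcomp.clm_apply hvel).deriv, dirDeriv_dirDeriv hq]
  simp [dirDeriv, parabola_zero]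

lemma second_derivative_test_along_parabola (hq : ContDiffAt ℝ 2 q y) (e m : E)
    (hmin : ∀ᶠ t in 𝓝 (0 : ℝ), q y ≤ q (parabola y e m t)) :
    ∂[e] q y = 0 ∧ 0 ≤ ∂[e] (∂[e] q) y + 2 * ∂[m] q y := by
  have hloc : IsLocalMin (fun t => q (parabola y e m t)) 0 :=
    hmin.mono fun t ht => by simpa only [parabola_zero] using ht
  have hcont := (eventually_hasDerivAt_comp_parabola hq e m).self_of_nhds.continuousAt
  rw [← deriv_comp_parabola hq e m, ← deriv_deriv_comp_parabola hq e m]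
  exact ⟨hloc.deriv_eq_zero, deriv_deriv_nonneg_of_isLocalMin hloc hcont⟩

lemma dirDeriv_dirDeriv_nonneg_of_isLocalMin (hq : ContDiffAt ℝ 2 q y) (hmin : IsLocalMin q y)
    (e : E) : 0 ≤ ∂[e] (∂[e] q) y := by
  have hmin₀ := (tendsto_parabola y e 0).eventually hmin
  simpa [dirDeriv] using (second_derivative_test_along_parabola hq e 0 hmin₀).2

lemma boundary_second_derivative_test (hh : ContDiffAt ℝ 2 h y) (hq : ContDiffAt ℝ 2 q y)
    {e m : E} (h₀ : h y = 0) (h₁ : ∂[e] h y = 0) (h₂ : 0 < ∂[e] (∂[e] h) y + 2 * ∂[m] h y)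
    (hmin : ∀ z, 0 < h z → q y ≤ q z) :
    ∂[e] q y = 0 ∧ 0 ≤ ∂[e] (∂[e] q) y + 2 * ∂[m] q y := by
  have hpos : ∀ᶠ t in 𝓝[≠] (0 : ℝ), h (parabola y e m 0) < h (parabola y e m t) :=
    eventually_lt_of_deriv_deriv_pos
      ((eventually_hasDerivAt_comp_parabola hh e m).mono fun t ht => ht.differentiableAt)
      ((deriv_comp_parabola hh e m).trans h₁) ((deriv_deriv_comp_parabola hh e m).symm ▸ h₂)
  rw [parabola_zero, h₀] at hpos
  refine second_derivative_test_along_parabola hq e m ?_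
  filter_upwards [eventually_nhdsWithin_iff.1 hpos] with t ht
  rcases eq_or_ne t 0 with rfl | hne
  · rw [parabola_zero]
  · exact hmin _ (ht hne)

lemma dirDeriv_le_of_le_of_pos {p : E → ℝ} {v : E} (hh : DifferentiableAt ℝ h y)
    (hp : DifferentiableAt ℝ p y) (hq : DifferentiableAt ℝ q y) (h₀ : h y = 0) (h₁ : 0 < ∂[v] h y)
    (heq : p y = q y) (hle : ∀ z, 0 < h z → p z ≤ q z) : ∂[v] p y ≤ ∂[v] q y := by
  have slope {k : E → ℝ} (hk : DifferentiableAt ℝ k y) :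
      Tendsto (fun t : ℝ => t⁻¹ * (k (y + t • v) - k y)) (𝓝[>] 0) (𝓝 (∂[v] k y)) :=
    (hk.hasFDerivAt.hasLineDerivAt v).tendsto_slope_zero_right
  refine le_of_tendsto_of_tendsto (slope hp) (slope hq) ?_
  filter_upwards [(slope hh).eventually (lt_mem_nhds h₁), self_mem_nhdsWithin] with t ht ht₀
  have hinv : 0 < t⁻¹ := inv_pos.2 ht₀
  have hpos : 0 < h (y + t • v) := by
    simpa [h₀] using pos_of_mul_pos_right ht hinv.le
  rw [heq]
  gcongr
  exact hle _ hpos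

end SecondDerivativeTests

section Gradient

variable {E : Type*} [NormedAddCommGroup E] [InnerProductSpace ℝ E] {f g : E → ℝ} {y : E}

lemma dirDeriv_inner_const {p : E → E} (hp : DifferentiableAt ℝ p y) (v w : E) :
    ∂[v] (fun z => ⟪p z, w⟫) y = ⟪∂[v] p y, w⟫ := by
  simp [dirDeriv, fderiv_inner_apply ℝ hp (differentiableAt_const w)]

variable [CompleteSpace E]

lemma contDiffAt_gradient {m n : WithTop ℕ∞} (hf : ContDiffAt ℝ n f y) (hmn : m + 1 ≤ n) :
    ContDiffAt ℝ m (∇ f) y :=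
  (InnerProductSpace.toDual ℝ E).symm.contDiff.contDiffAt.comp y (hf.fderiv_right hmn)

lemma inner_gradient_eq_dirDeriv (f : E → ℝ) (w : E) : (fun z => ⟪∇ f z, w⟫) = ∂[w] f :=
  funext fun _ => inner_gradient_left

lemma inner_fderiv_gradient (hf : ContDiffAt ℝ 2 f y) (v w : E) :
    ⟪fderiv ℝ (∇ f) y v, w⟫ = ∂[v] (∂[w] f) y := by
  rw [← inner_gradient_eq_dirDeriv f w, dirDeriv_inner_const
    ((contDiffAt_gradient hf one_add_one_eq_two.le).differentiableAt one_ne_zero)]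
  rfl

lemma fderiv_gradient_isSymmetric (hf : ContDiffAt ℝ 2 f y) (v w : E) :
    ⟪fderiv ℝ (∇ f) y v, w⟫ = ⟪v, fderiv ℝ (∇ f) y w⟫ := by
  rw [inner_fderiv_gradient hf, real_inner_comm, inner_fderiv_gradient hf, dirDeriv_comm hf]

lemma inner_dirDeriv_dirDeriv_gradient (hf : ContDiffAt ℝ 3 f y) (u v w : E) :
    ⟪∂[u] (∂[v] (∇ f)) y, w⟫ = ∂[u] (∂[v] (∂[w] f)) y := by
  have hgrad : ContDiffAt ℝ 2 (∇ f) y := contDiffAt_gradient hf two_add_one_eq_three.le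
  have hev : (fun z => ⟪∂[v] (∇ f) z, w⟫) =ᶠ[𝓝 y] ∂[v] (∂[w] f) :=
    (hf.eventually (by simp)).mono fun z hz => inner_fderiv_gradient (hz.of_le (by norm_num)) v w
  rw [← (dirDeriv_congr hev u).self_of_nhds, dirDeriv_inner_const
    ((contDiffAt_dirDeriv hgrad one_add_one_eq_two.le v).differentiableAt one_ne_zero)]

lemma dirDeriv_comp_gradient (hf : ContDiffAt ℝ 2 f y) (hg : DifferentiableAt ℝ g (∇ f y))
    (v : E) : ∂[v] (fun z => g (∇ f z)) y = ⟪∇ g (∇ f y), fderiv ℝ (∇ f) y v⟫ := by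
  rw [dirDeriv_comp hg
    ((contDiffAt_gradient hf one_add_one_eq_two.le).differentiableAt one_ne_zero)]
  exact inner_gradient_left.symm

lemma dirDeriv_dirDeriv_comp_gradient (hf : ContDiffAt ℝ 3 f y) (hg : ContDiffAt ℝ 2 g (∇ f y))
    (v : E) :
    ∂[v] (∂[v] (fun z => g (∇ f z))) y =
      ⟪fderiv ℝ (∇ f) y v, fderiv ℝ (∇ g) (∇ f y) (fderiv ℝ (∇ f) y v)⟫ +
        ∂[∇ g (∇ f y)] (∂[v] (∂[v] f)) y := by
  have hthird : ⟪∇ g (∇ f y), ∂[v] (∂[v] (∇ f)) y⟫ = ∂[∇ g (∇ f y)] (∂[v] (∂[v] f)) y := by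
    rw [real_inner_comm, inner_dirDeriv_dirDeriv_gradient hf,
      ← dirDeriv_dirDeriv_dirDeriv_rotate hf (∇ g (∇ f y))]
  rw [dirDeriv_dirDeriv_comp hg (contDiffAt_gradient hf two_add_one_eq_three.le),
    ← dirDeriv_dirDeriv hg, ← inner_fderiv_gradient hg, real_inner_comm, ← inner_gradient_left,
    hthird]
  rfl

end Gradient

/-- `M` bounds `Φ` and its first two derivatives at `y`. -/
structure HasC2BoundAt {V W : Type*} [NormedAddCommGroup V] [NormedSpace ℝ V]
    [NormedAddCommGroup W] [NormedSpace ℝ W] (Φ : W → V) (M : ℝ) (y : W) : Prop where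
  norm_le : ‖Φ y‖ ≤ M
  norm_fderiv_le : ‖fderiv ℝ Φ y‖ ≤ M
  norm_fderiv_fderiv_le : ‖fderiv ℝ (fderiv ℝ Φ) y‖ ≤ M

section FrameLaplacian

variable {E F W κ : Type*} [Fintype κ] [NormedAddCommGroup E] [NormedSpace ℝ E]
  [NormedAddCommGroup F] [NormedSpace ℝ F] [NormedAddCommGroup W] [NormedSpace ℝ W]

/-- The second-order operator `q ↦ ∑ₖ D²q(Pₖ, Pₖ)` with frozen directions `Pₖ`. When the `Pₖ` are an
inverse frame of `f` (see `IsInverseFrame`), it is the linearization at `f` of the dual equation. -/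
def frameLaplacian (P : κ → E) (q : E → F) (y : E) : F := ∑ k, ∂[P k] (∂[P k] q) y

variable {P : κ → E} {y : E}

lemma contDiffAt_frameLaplacian {m n : WithTop ℕ∞} {q : E → F} (hq : ContDiffAt ℝ n q y)
    (hmn : m + 1 + 1 ≤ n) : ContDiffAt ℝ m (frameLaplacian P q) y :=
  ContDiffAt.sum fun k _ => contDiffAt_dirDeriv (contDiffAt_dirDeriv hq hmn (P k)) le_rfl (P k)

lemma frameLaplacian_add_const_mul {p q : E → ℝ} (hp : ContDiffAt ℝ 2 p y)
    (hq : ContDiffAt ℝ 2 q y) (a : ℝ) :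
    frameLaplacian P (fun z => p z + a * q z) y =
      frameLaplacian P p y + a * frameLaplacian P q y := by
  simp only [frameLaplacian, dirDeriv_dirDeriv_add_const_mul hp hq, Finset.sum_add_distrib,
    Finset.mul_sum]

lemma dirDeriv_frameLaplacian {q : E → F} (hq : ContDiffAt ℝ 3 q y) (e : E) :
    ∂[e] (frameLaplacian P q) y = frameLaplacian P (∂[e] q) y := by
  have hd (k : κ) : DifferentiableAt ℝ (∂[P k] (∂[P k] q)) y :=
    (contDiffAt_dirDeriv (contDiffAt_dirDeriv hq two_add_one_eq_three.le _)
      one_add_one_eq_two.le _).differentiableAt one_ne_zero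
  change fderiv ℝ (fun z => ∑ k, ∂[P k] (∂[P k] q) z) y e = _
  rw [fderiv_fun_sum fun k _ => hd k, sum_apply]
  exact Finset.sum_congr rfl fun k _ => dirDeriv_dirDeriv_dirDeriv_rotate hq e (P k) (P k)

lemma frameLaplacian_comp {Φ : F → W} {γ : E → F} (hΦ : ContDiffAt ℝ 2 Φ (γ y))
    (hγ : ContDiffAt ℝ 2 γ y) :
    frameLaplacian P (fun z => Φ (γ z)) y =
      ∑ k, fderiv ℝ (fderiv ℝ Φ) (γ y) (∂[P k] γ y) (∂[P k] γ y) +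
        fderiv ℝ Φ (γ y) (frameLaplacian P γ y) := by
  simp only [frameLaplacian, dirDeriv_dirDeriv_comp hΦ hγ, Finset.sum_add_distrib, map_sum]

lemma norm_frameLaplacian_comp_le {Φ : F → W} {γ : E → F} {M a b : ℝ}
    (hΦ : ContDiffAt ℝ 2 Φ (γ y)) (hγ : ContDiffAt ℝ 2 γ y) (hM : HasC2BoundAt Φ M (γ y))
    (ha : ∀ k, ‖∂[P k] γ y‖ ≤ a) (hb : ‖frameLaplacian P γ y‖ ≤ b) :
    ‖frameLaplacian P (fun z => Φ (γ z)) y‖ ≤ ∑ _k : κ, M * a * a + M * b := by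
  have hM₀ : 0 ≤ M := (norm_nonneg _).trans hM.norm_le
  rw [frameLaplacian_comp hΦ hγ]
  refine norm_add_le_of_le (norm_sum_le_of_le _ fun k _ => ?_) ?_
  · have ha₀ : 0 ≤ a := (norm_nonneg _).trans (ha k)
    exact ((fderiv ℝ (fderiv ℝ Φ) (γ y)).le_opNorm₂ _ _).trans (by
      gcongr; exacts [hM.norm_fderiv_fderiv_le, ha k, ha k])
  · exact (fderiv ℝ Φ (γ y)).le_of_opNorm_le_of_le hM.norm_fderiv_le hb

lemma frameLaplacian_nonneg_of_isLocalMin {q : E → ℝ} (hq : ContDiffAt ℝ 2 q y)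
    (hmin : IsLocalMin q y) : 0 ≤ frameLaplacian P q y :=
  Finset.sum_nonneg fun k _ => dirDeriv_dirDeriv_nonneg_of_isLocalMin hq hmin (P k)

lemma nonneg_of_frameLaplacian_neg {O : Set E} {q : E → ℝ} (hO : IsOpen O)
    (hK : IsCompact (closure O)) (hq : ∀ y ∈ closure O, ContDiffAt ℝ 2 q y)
    (hneg : ∀ y ∈ O, ∃ P : κ → E, frameLaplacian P q y < 0) (hb : ∀ y ∈ frontier O, 0 ≤ q y) :
    ∀ y ∈ closure O, 0 ≤ q y := by
  intro y hy
  obtain ⟨z, hz, hmin⟩ :=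
    hK.exists_isMinOn ⟨y, hy⟩ fun z hz => (hq z hz).continuousAt.continuousWithinAt
  refine le_trans (hb z ⟨hz, fun hzO => ?_⟩) (hmin hy)
  rw [hO.interior_eq] at hzO
  obtain ⟨P, hP⟩ := hneg z hzO
  have hloc : IsLocalMin q z := (hmin.on_subset subset_closure).isLocalMin (hO.mem_nhds hzO)
  exact hP.not_ge (frameLaplacian_nonneg_of_isLocalMin (hq z hz) hloc)

end FrameLaplacian

section FrameLaplacianGradient

variable {E κ : Type*} [Fintype κ] [NormedAddCommGroup E] [InnerProductSpace ℝ E] [CompleteSpace E]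
  {P : κ → E} {f h : E → ℝ} {y : E}

lemma inner_frameLaplacian_gradient (hf : ContDiffAt ℝ 3 f y) (w : E) :
    ⟪frameLaplacian P (∇ f) y, w⟫ = frameLaplacian P (∂[w] f) y := by
  simp only [frameLaplacian, sum_inner, inner_dirDeriv_dirDeriv_gradient hf]

lemma frameLaplacian_le_of_hessian_le {θ : ℝ} (hh : ContDiffAt ℝ 2 h y)
    (hθ : ∀ v, ⟪v, fderiv ℝ (∇ h) y v⟫ ≤ -θ * ‖v‖ ^ 2) :
    frameLaplacian P h y ≤ -θ * ∑ k, ‖P k‖ ^ 2 := by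
  rw [Finset.mul_sum]
  refine Finset.sum_le_sum fun k _ => ?_
  rw [← inner_fderiv_gradient hh, real_inner_comm]
  exact hθ (P k)

/-- The base point of the correction terms: an auxiliary direction `e`, the position and the
gradient of `f`. -/
def gradientJet (e : E) (f : E → ℝ) (y : E) : E × E × E := (e, y, ∇ f y)

lemma contDiffAt_gradientJet {m n : WithTop ℕ∞} (hf : ContDiffAt ℝ n f y) (hmn : m + 1 ≤ n)
    (e : E) : ContDiffAt ℝ m (gradientJet e f) y :=
  contDiffAt_const.prodMk (contDiffAt_id.prodMk (contDiffAt_gradient hf hmn))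

lemma dirDeriv_gradientJet (hf : ContDiffAt ℝ 2 f y) (e v : E) :
    ∂[v] (gradientJet e f) y = (0, v, ∂[v] (∇ f) y) := by
  have hgrad : DifferentiableAt ℝ (∇ f) y :=
    (contDiffAt_gradient hf one_add_one_eq_two.le).differentiableAt one_ne_zero
  have := (hasFDerivAt_const e y).prodMk ((hasFDerivAt_id y).prodMk hgrad.hasFDerivAt)
  exact congrArg (· v) this.fderiv

lemma dirDeriv_dirDeriv_gradientJet (hf : ContDiffAt ℝ 3 f y) (e v : E) :
    ∂[v] (∂[v] (gradientJet e f)) y = (0, 0, ∂[v] (∂[v] (∇ f)) y) := by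
  have hev : ∂[v] (gradientJet e f) =ᶠ[𝓝 y] fun z => (0, v, ∂[v] (∇ f) z) :=
    (hf.eventually (by simp)).mono fun z hz => dirDeriv_gradientJet (hz.of_le (by norm_num)) e v
  have hgrad : DifferentiableAt ℝ (∂[v] (∇ f)) y :=
    (contDiffAt_dirDeriv (contDiffAt_gradient hf two_add_one_eq_three.le)
      one_add_one_eq_two.le v).differentiableAt one_ne_zero
  have := (hasFDerivAt_const (0 : E) y).prodMk ((hasFDerivAt_const v y).prodMk hgrad.hasFDerivAt)
  rw [(dirDeriv_congr hev v).self_of_nhds]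
  exact congrArg (· v) this.fderiv

lemma norm_frameLaplacian_gradientJet (hf : ContDiffAt ℝ 3 f y) (e : E) :
    ‖frameLaplacian P (gradientJet e f) y‖ = ‖frameLaplacian P (∇ f) y‖ := by
  simp [frameLaplacian, dirDeriv_dirDeriv_gradientJet hf, Prod.norm_def, Prod.fst_sum,
    Prod.snd_sum]

end FrameLaplacianGradient

section DualEquation

variable {E κ : Type*} [Fintype κ] [NormedAddCommGroup E] [InnerProductSpace ℝ E]

lemma dirDeriv_sum_inner_const {r : κ → E → E} {y : E} {P : κ → E}
    (hr : ∀ k, DifferentiableAt ℝ (r k) y) (e : E) :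
    ∂[e] (fun z => ∑ k, ⟪r k z, P k⟫) y = ∑ k, ⟪∂[e] (r k) y, P k⟫ := by
  have hd (k : κ) : DifferentiableAt ℝ (fun z => ⟪r k z, P k⟫) y :=
    (hr k).inner ℝ (differentiableAt_const _)
  simp only [← dirDeriv_inner_const (hr _)]
  unfold dirDeriv
  rw [fderiv_fun_sum fun k _ => hd k, sum_apply]

variable [CompleteSpace E]

/-- The vectors `Pₖ = (D²f)⁻¹ rₖ` at the point `y` of a solution `f` of the dual equation
`∑ₖ ⟪rₖ, (D²f)⁻¹ rₖ⟫ = c`. Stating the equation through these vectors avoids inverting `D²f`. -/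
structure IsInverseFrame (r : κ → E → E) (f : E → ℝ) (c : ℝ) (y : E) (P : κ → E) : Prop where
  hessian_apply : ∀ k, fderiv ℝ (∇ f) y (P k) = r k y
  sum_inner : ∑ k, ⟪r k y, P k⟫ = c

/-- `f` solves `∑ₖ ⟪rₖ, (D²f)⁻¹ rₖ⟫ = c` on `O`, is four times continuously differentiable up to
the boundary, and its Hessian is bounded below by `c⁻¹`. -/
structure IsDualSolution (O : Set E) (r : κ → E → E) (f : E → ℝ) (c : ℝ) : Prop where
  contDiffAt : ∀ y ∈ closure O, ContDiffAt ℝ 4 f y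
  const_pos : 0 < c
  exists_frame : ∀ y ∈ O, ∃ P, IsInverseFrame r f c y P
  coercive : ∀ y ∈ O, ∀ v, ‖v‖ ^ 2 ≤ c * ⟪v, fderiv ℝ (∇ f) y v⟫

variable {O : Set E} {r : κ → E → E} {f : E → ℝ} {c : ℝ} {y : E} {P : κ → E}

lemma frameLaplacian_eq_sum_inner (hf : ContDiffAt ℝ 2 f y) :
    frameLaplacian P f y = ∑ k, ⟪P k, fderiv ℝ (∇ f) y (P k)⟫ := by
  simp only [frameLaplacian, ← inner_fderiv_gradient hf, fderiv_gradient_isSymmetric hf]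

namespace IsInverseFrame

lemma frameLaplacian_eq (hP : IsInverseFrame r f c y P) (hf : ContDiffAt ℝ 2 f y) :
    frameLaplacian P f y = c := by
  rw [frameLaplacian_eq_sum_inner hf, ← hP.sum_inner]
  exact Finset.sum_congr rfl fun k _ => by rw [hP.hessian_apply, real_inner_comm]

lemma sum_norm_sq_le (hP : IsInverseFrame r f c y P) (hs : IsDualSolution O r f c) (hy : y ∈ O) :
    ∑ k, ‖P k‖ ^ 2 ≤ c ^ 2 := by
  calc ∑ k, ‖P k‖ ^ 2 ≤ ∑ k, c * ⟪r k y, P k⟫ := Finset.sum_le_sum fun k _ => by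
        simpa only [hP.hessian_apply, real_inner_comm] using hs.coercive y hy (P k)
    _ = c ^ 2 := by rw [← Finset.mul_sum, hP.sum_inner, sq]

lemma norm_le (hP : IsInverseFrame r f c y P) (hs : IsDualSolution O r f c) (hy : y ∈ O) (k : κ) :
    ‖P k‖ ≤ c := by
  refine (sq_le_sq₀ (norm_nonneg _) hs.const_pos.le).1 (le_trans ?_ (hP.sum_norm_sq_le hs hy))
  exact Finset.single_le_sum (f := fun k => ‖P k‖ ^ 2) (fun k _ => sq_nonneg _) (Finset.mem_univ k)

lemma sq_le_sum_norm_sq_mul (hP : IsInverseFrame r f c y P) :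
    c ^ 2 ≤ (∑ k, ‖r k y‖ ^ 2) * ∑ k, ‖P k‖ ^ 2 := by
  have hle : |c| ≤ ∑ k, ‖r k y‖ * ‖P k‖ := by
    rw [← hP.sum_inner]
    exact (Finset.abs_sum_le_sum_abs _ _).trans
      (Finset.sum_le_sum fun k _ => abs_real_inner_le_norm _ _)
  calc c ^ 2 = |c| ^ 2 := (sq_abs c).symm
    _ ≤ (∑ k, ‖r k y‖ * ‖P k‖) ^ 2 := by gcongr
    _ ≤ _ := Finset.sum_mul_sq_le_sq_mul_sq _ _ _

end IsInverseFrame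

namespace IsDualSolution

lemma two_mul_sum_inner_le (hs : IsDualSolution O r f c) (hy : y ∈ O) (Q : κ → E) :
    2 * ∑ k, ⟪r k y, Q k⟫ ≤ c + frameLaplacian Q f y := by
  obtain ⟨P, hP⟩ := hs.exists_frame y hy
  have hf : ContDiffAt ℝ 2 f y := (hs.contDiffAt y (subset_closure hy)).of_le (by norm_num)
  rw [frameLaplacian_eq_sum_inner hf, ← hP.sum_inner, Finset.mul_sum, ← Finset.sum_add_distrib]
  refine Finset.sum_le_sum fun k _ => ?_
  have hnonneg : 0 ≤ ⟪P k - Q k, fderiv ℝ (∇ f) y (P k - Q k)⟫ :=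
    nonneg_of_mul_nonneg_right ((sq_nonneg _).trans (hs.coercive y hy _)) hs.const_pos
  simp only [map_sub, inner_sub_left, inner_sub_right, ← fderiv_gradient_isSymmetric hf (P k),
    hP.hessian_apply] at hnonneg
  rw [real_inner_comm (r k y) (Q k)] at hnonneg
  rw [real_inner_comm (P k) (r k y)] at *
  linarith

lemma isLocalMin_frameLaplacian_sub (hO : IsOpen O) (hs : IsDualSolution O r f c) (hy : y ∈ O)
    (hP : IsInverseFrame r f c y P) :
    IsLocalMin (fun z => frameLaplacian P f z + (-2) * ∑ k, ⟪r k z, P k⟫) y := by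
  filter_upwards [hO.mem_nhds hy] with z hz
  rw [hP.sum_inner, hP.frameLaplacian_eq
    ((hs.contDiffAt y (subset_closure hy)).of_le (by norm_num))]
  linarith [hs.two_mul_sum_inner_le hz P]

lemma frameLaplacian_dirDeriv (hO : IsOpen O) (hs : IsDualSolution O r f c) (hy : y ∈ O)
    (hP : IsInverseFrame r f c y P) (hr : ∀ k, DifferentiableAt ℝ (r k) y) (e : E) :
    frameLaplacian P (∂[e] f) y = 2 * ∑ k, ⟪∂[e] (r k) y, P k⟫ := by
  have hf := hs.contDiffAt y (subset_closure hy)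
  have hcrit : ∂[e] (fun z => frameLaplacian P f z + (-2) * ∑ k, ⟪r k z, P k⟫) y = 0 := by
    unfold dirDeriv
    rw [(hs.isLocalMin_frameLaplacian_sub hO hy hP).fderiv_eq_zero]
    rfl
  rw [dirDeriv_add_const_mul
      ((contDiffAt_frameLaplacian (m := 2) hf (by norm_num)).differentiableAt two_ne_zero)
      (DifferentiableAt.fun_sum fun k _ => (hr k).inner ℝ (differentiableAt_const _)),
    dirDeriv_frameLaplacian (hf.of_le (by norm_num)), dirDeriv_sum_inner_const hr] at hcrit
  linarith

lemma two_mul_sum_inner_le_frameLaplacian_dirDeriv_dirDeriv (hO : IsOpen O)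
    (hs : IsDualSolution O r f c) (hy : y ∈ O) (hP : IsInverseFrame r f c y P)
    (hr : ∀ k, ContDiffAt ℝ 2 (r k) y) (e : E) :
    2 * ∑ k, ⟪∂[e] (∂[e] (r k)) y, P k⟫ ≤ frameLaplacian P (∂[e] (∂[e] f)) y := by
  have hf := hs.contDiffAt y (subset_closure hy)
  have hL : ContDiffAt ℝ 2 (frameLaplacian P f) y := contDiffAt_frameLaplacian hf (by norm_num)
  have hR : ContDiffAt ℝ 2 (fun z => ∑ k, ⟪r k z, P k⟫) y :=
    ContDiffAt.sum fun k _ => (hr k).inner ℝ contDiffAt_const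
  have hmin := dirDeriv_dirDeriv_nonneg_of_isLocalMin (hL.add (contDiffAt_const.mul hR))
    (hs.isLocalMin_frameLaplacian_sub hO hy hP) e
  have hL' : ∂[e] (frameLaplacian P f) =ᶠ[𝓝 y] frameLaplacian P (∂[e] f) :=
    (hf.eventually (by simp)).mono fun z hz =>
      dirDeriv_frameLaplacian (hz.of_le (by norm_num)) e
  have hR' : ∂[e] (fun z => ∑ k, ⟪r k z, P k⟫) =ᶠ[𝓝 y] fun z => ∑ k, ⟪∂[e] (r k) z, P k⟫ := by
    filter_upwards [eventually_all.2 fun k => (hr k).eventually (by simp)] with z hz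
    exact dirDeriv_sum_inner_const (fun k => (hz k).differentiableAt two_ne_zero) e
  rw [dirDeriv_dirDeriv_add_const_mul hL hR, (dirDeriv_congr hL' e).self_of_nhds,
    (dirDeriv_congr hR' e).self_of_nhds,
    dirDeriv_frameLaplacian (contDiffAt_dirDeriv hf three_add_one_eq_four.le e),
    dirDeriv_sum_inner_const fun k => (contDiffAt_dirDeriv (hr k)
      one_add_one_eq_two.le e).differentiableAt one_ne_zero] at hmin
  linarith

lemma norm_frameLaplacian_gradient_le (hO : IsOpen O) (hs : IsDualSolution O r f c) (hy : y ∈ O)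
    (hP : IsInverseFrame r f c y P) (hr : ∀ k, DifferentiableAt ℝ (r k) y) :
    ‖frameLaplacian P (∇ f) y‖ ≤ 2 * ∑ k, ‖fderiv ℝ (r k) y‖ * ‖P k‖ := by
  have hf : ContDiffAt ℝ 3 f y := (hs.contDiffAt y (subset_closure hy)).of_le (by norm_num)
  rw [← innerSL_apply_norm (𝕜 := ℝ)]
  refine ContinuousLinearMap.opNorm_le_bound _ (by positivity) fun w => ?_
  rw [innerSL_apply_apply, inner_frameLaplacian_gradient hf,
    hs.frameLaplacian_dirDeriv hO hy hP hr, norm_mul, Real.norm_two, mul_assoc, Finset.sum_mul]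
  gcongr
  refine norm_sum_le_of_le _ fun k _ => ?_
  calc ‖⟪∂[w] (r k) y, P k⟫‖ ≤ ‖∂[w] (r k) y‖ * ‖P k‖ := norm_inner_le_norm _ _
    _ ≤ (‖fderiv ℝ (r k) y‖ * ‖w‖) * ‖P k‖ := by
      gcongr; exact (fderiv ℝ (r k) y).le_opNorm w
    _ = ‖fderiv ℝ (r k) y‖ * ‖P k‖ * ‖w‖ := by ring

end IsDualSolution

end DualEquation

lemma exists_hasC2BoundAt {V W : Type*} [NormedAddCommGroup V] [NormedSpace ℝ V]
    [NormedAddCommGroup W] [NormedSpace ℝ W] {Φ : W → V} {K : Set W} (hK : IsCompact K)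
    (hΦ : ∀ y ∈ K, ContDiffAt ℝ 2 Φ y) :
    ∃ M, 0 ≤ M ∧ ∀ y ∈ K, HasC2BoundAt Φ M y := by
  have hΦ' : ∀ y ∈ K, ContDiffAt ℝ 1 (fderiv ℝ Φ) y := fun y hy =>
    (hΦ y hy).fderiv_right one_add_one_eq_two.le
  have hΦ'' : ∀ y ∈ K, ContDiffAt ℝ 0 (fderiv ℝ (fderiv ℝ Φ)) y := fun y hy =>
    (hΦ' y hy).fderiv_right (zero_add 1).le
  obtain ⟨M₀, hM₀⟩ := hK.exists_bound_of_continuousOn fun y hy =>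
    (hΦ y hy).continuousAt.continuousWithinAt
  obtain ⟨M₁, hM₁⟩ := hK.exists_bound_of_continuousOn fun y hy =>
    (hΦ' y hy).continuousAt.continuousWithinAt
  obtain ⟨M₂, hM₂⟩ := hK.exists_bound_of_continuousOn (E := W →L[ℝ] W →L[ℝ] V) fun y hy =>
    (hΦ'' y hy).continuousAt.continuousWithinAt
  refine ⟨|M₀| + |M₁| + |M₂|, by positivity, fun y hy => ⟨?_, ?_, ?_⟩⟩
  · linarith [hM₀ y hy, le_abs_self M₀, abs_nonneg M₁, abs_nonneg M₂]
  · linarith [hM₁ y hy, le_abs_self M₁, abs_nonneg M₀, abs_nonneg M₂]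
  · linarith [hM₂ y hy, le_abs_self M₂, abs_nonneg M₀, abs_nonneg M₁]

lemma exists_forall_hasC2BoundAt {κ V W : Type*} [Finite κ] [NormedAddCommGroup V]
    [NormedSpace ℝ V] [NormedAddCommGroup W] [NormedSpace ℝ W] {r : κ → W → V} {K : Set W}
    (hK : IsCompact K) (hr : ∀ k, ∀ y ∈ K, ContDiffAt ℝ 2 (r k) y) :
    ∃ R, 0 ≤ R ∧ ∀ y ∈ K, ∀ k, HasC2BoundAt (r k) R y := by
  have := Fintype.ofFinite κ
  choose R hR₀ hR using fun k => exists_hasC2BoundAt hK (hr k)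
  have hle (k : κ) : R k ≤ ∑ k, R k :=
    Finset.single_le_sum (fun k _ => hR₀ k) (Finset.mem_univ k)
  exact ⟨∑ k, R k, Finset.sum_nonneg fun k _ => hR₀ k, fun y hy k =>
    ⟨(hR k y hy).norm_le.trans (hle k), (hR k y hy).norm_fderiv_le.trans (hle k),
      (hR k y hy).norm_fderiv_fderiv_le.trans (hle k)⟩⟩

section DefiningFunction

variable {E : Type*} [NormedAddCommGroup E] [InnerProductSpace ℝ E] [CompleteSpace E]

/-- `h` is a defining function, concave with constant `θ`, of the bounded domain `Ω`.
Boundedness is recorded as compactness of the closure. -/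
structure IsConvexDefiningFunction (Ω : Set E) (h : E → ℝ) (θ : ℝ) : Prop where
  contDiff : ContDiff ℝ 3 h
  eq_setOf_pos : Ω = {p | 0 < h p}
  norm_gradient : ∀ p ∈ frontier Ω, ‖∇ h p‖ = 1
  const_pos : 0 < θ
  hessian_le : ∀ p v, ⟪v, fderiv ℝ (∇ h) p v⟫ ≤ -θ * ‖v‖ ^ 2
  isCompact_closure : IsCompact (closure Ω)

/-- The unit vectors tangent to the boundary of `Ω`, together with their base points. -/
def unitTangents (Ω : Set E) (h : E → ℝ) : Set (E × E) :=
  {p | p.1 ∈ frontier Ω ∧ ‖p.2‖ = 1 ∧ ⟪p.2, ∇ h p.1⟫ = 0}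

variable {Ω : Set E} {h q : E → ℝ} {θ : ℝ} {y : E}

namespace IsConvexDefiningFunction

lemma isOpen (hh : IsConvexDefiningFunction Ω h θ) : IsOpen Ω := by
  rw [hh.eq_setOf_pos]
  exact isOpen_lt continuous_const hh.contDiff.continuous

lemma pos_iff (hh : IsConvexDefiningFunction Ω h θ) : 0 < h y ↔ y ∈ Ω := by
  rw [hh.eq_setOf_pos]
  exact Iff.rfl

lemma eq_zero_of_mem_frontier (hh : IsConvexDefiningFunction Ω h θ) (hy : y ∈ frontier Ω) :
    h y = 0 := by
  rw [hh.eq_setOf_pos] at hy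
  exact (frontier_lt_subset_eq continuous_const hh.contDiff.continuous hy).symm

lemma continuous_gradient (hh : IsConvexDefiningFunction Ω h θ) : Continuous (∇ h) :=
  continuous_iff_continuousAt.2 fun _ =>
    (contDiffAt_gradient hh.contDiff.contDiffAt two_add_one_eq_three.le).continuousAt

lemma isCompact_unitTangents [ProperSpace E] (hh : IsConvexDefiningFunction Ω h θ) :
    IsCompact (unitTangents Ω h) := by
  have hfrontier : IsCompact (frontier Ω) :=
    hh.isCompact_closure.of_isClosed_subset isClosed_frontier frontier_subset_closure
  have horth : IsClosed {p : E × E | ⟪p.2, ∇ h p.1⟫ = 0} :=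
    isClosed_eq (continuous_snd.inner (hh.continuous_gradient.comp continuous_fst))
      continuous_const
  convert (hfrontier.prod (isCompact_sphere (0 : E) 1)).inter_right horth using 1
  ext p
  simp [unitTangents, and_assoc]

end IsConvexDefiningFunction

lemma dirDeriv_eq_inner_gradient (v : E) : ∂[v] h y = ⟪v, ∇ h y⟫ := by
  rw [real_inner_comm]
  exact inner_gradient_left.symm

lemma dirDeriv_gradient_self (hν : ‖∇ h y‖ = 1) : ∂[∇ h y] h y = 1 := by
  rw [dirDeriv_eq_inner_gradient, real_inner_self_eq_norm_sq, hν, one_pow]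

/-- Going along parabolas bent into the domain shows that the tangential derivatives vanish at a
boundary minimum, so that the gradient is normal. -/
lemma gradient_eq_smul_of_boundary_min (hh : ContDiffAt ℝ 2 h y) (hq : ContDiffAt ℝ 2 q y)
    (h₀ : h y = 0) (hν : ‖∇ h y‖ = 1) (hmin : ∀ z, 0 < h z → q y ≤ q z) :
    ∇ q y = (∂[∇ h y] q y) • ∇ h y := by
  have htang (e : E) (he : ⟪e, ∇ h y⟫ = 0) : ⟪e, ∇ q y⟫ = 0 := by
    rw [← dirDeriv_eq_inner_gradient] at he ⊢
    refine (boundary_second_derivative_test (m := (1 + |∂[e] (∂[e] h) y|) • ∇ h y)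
      hh hq h₀ he ?_ hmin).1
    rw [show ∂[(1 + |∂[e] (∂[e] h) y|) • ∇ h y] h y = 1 + |∂[e] (∂[e] h) y| by
      rw [dirDeriv_eq_inner_gradient, real_inner_smul_left, real_inner_self_eq_norm_sq, hν]; ring]
    linarith [neg_abs_le (∂[e] (∂[e] h) y), abs_nonneg (∂[e] (∂[e] h) y)]
  refine ext_inner_left ℝ fun v => ?_
  have hproj : ⟪v - ⟪v, ∇ h y⟫ • ∇ h y, ∇ h y⟫ = 0 := by
    rw [inner_sub_left, real_inner_smul_left, real_inner_self_eq_norm_sq, hν]; ring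
  have := htang _ hproj
  rw [inner_sub_left, real_inner_smul_left] at this
  rw [real_inner_smul_right, dirDeriv_eq_inner_gradient]
  linarith

lemma dirDeriv_dirDeriv_nonneg_of_boundary_min (hh : ContDiffAt ℝ 2 h y)
    (hq : ContDiffAt ℝ 2 q y) (h₀ : h y = 0) (hν : ‖∇ h y‖ = 1)
    (hmin : ∀ z, 0 < h z → q y ≤ q z) {e : E} (he : ⟪e, ∇ h y⟫ = 0) {K : ℝ}
    (hK : -∂[e] (∂[e] h) y < 2 * K) : 0 ≤ ∂[e] (∂[e] q) y + 2 * (K * ∂[∇ h y] q y) := by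
  have hm (p : E → ℝ) : ∂[K • ∇ h y] p y = K * ∂[∇ h y] p y := map_smul (fderiv ℝ p y) K _
  rw [← hm]
  refine (boundary_second_derivative_test hh hq h₀ ?_ ?_ hmin).2
  · rw [dirDeriv_eq_inner_gradient, he]
  · rw [hm, dirDeriv_gradient_self hν]; linarith

end DefiningFunction

lemma le_add_mul_of_neg_le_frameLaplacian {E κ : Type*} [Fintype κ] [NormedAddCommGroup E]
    [NormedSpace ℝ E] {O : Set E} {h q : E → ℝ} {ε K m : ℝ} (hO : IsOpen O)
    (hOc : IsCompact (closure O)) (hh : ContDiff ℝ 2 h)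
    (hq : ∀ y ∈ closure O, ContDiffAt ℝ 2 q y) (hε : 0 < ε) (hK : 0 ≤ K)
    (hP : ∀ y ∈ O, ∃ P : κ → E, frameLaplacian P h y ≤ -ε ∧ -K ≤ frameLaplacian P q y)
    (hh₀ : ∀ y ∈ frontier O, h y = 0) (hqm : ∀ y ∈ frontier O, q y ≤ m) :
    ∀ y ∈ closure O, q y ≤ m + (K / ε + 1) * h y := by
  have ha : 0 ≤ K / ε + 1 := by positivity
  have hb : ContDiff ℝ 2 fun z => m + (K / ε + 1) * h z :=
    contDiff_const.add (contDiff_const.mul hh)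
  suffices ∀ y ∈ closure O, 0 ≤ (m + (K / ε + 1) * h y) + (-1) * q y from fun y hy => by
    linarith [this y hy]
  refine nonneg_of_frameLaplacian_neg (κ := κ) hO hOc
    (fun y hy => hb.contDiffAt.add (contDiffAt_const.mul (hq y hy))) (fun y hy => ?_) fun y hy => ?_
  · obtain ⟨P, hPh, hPq⟩ := hP y hy
    refine ⟨P, ?_⟩
    rw [frameLaplacian_add_const_mul hb.contDiffAt (hq y (subset_closure hy)),
      frameLaplacian_add_const_mul contDiffAt_const hh.contDiffAt]
    have hconst : frameLaplacian P (fun _ : E => m) y = 0 := by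
      simp [frameLaplacian, show ∀ v : E, ∂[v] (fun _ : E => m) = fun _ => 0 from fun v => by
        ext; simp [dirDeriv], dirDeriv]
    have := mul_le_mul_of_nonneg_left hPh ha
    have hεK : K / ε * ε = K := div_mul_cancel₀ K hε.ne'
    rw [hconst]
    linarith
  · linarith [hqm y hy, mul_eq_zero_of_right (K / ε + 1) (hh₀ y hy)]

section SecondBoundaryProblem

variable {E κ : Type*} [Fintype κ] [NormedAddCommGroup E] [InnerProductSpace ℝ E] [CompleteSpace E]

/-- A solution of the dual equation on `O` whose gradient maps `O` into `Ω` and boundary to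
boundary. -/
structure IsSecondBoundarySolution (O Ω : Set E) (r : κ → E → E) (f : E → ℝ) (c : ℝ) : Prop
    extends IsDualSolution O r f c where
  mapsTo : MapsTo (∇ f) O Ω
  mapsTo_frontier : MapsTo (∇ f) (frontier O) (frontier Ω)

variable {O Ω : Set E} {r : κ → E → E} {f h g : E → ℝ} {c c₀ c₁ θ θ' : ℝ} {y : E}

lemma IsInverseFrame.exists_frameLaplacian_le (hO : IsCompact (closure O))
    (hr : ∀ k, ContinuousOn (r k) (closure O)) (hh : ContDiff ℝ 2 h) (hθ : 0 < θ)
    (hhess : ∀ p v, ⟪v, fderiv ℝ (∇ h) p v⟫ ≤ -θ * ‖v‖ ^ 2) (hc₀ : 0 < c₀) :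
    ∃ ε, 0 < ε ∧ ∀ f c, c₀ ≤ c → ∀ y ∈ O, ∀ P,
      IsInverseFrame r f c y P → frameLaplacian P h y ≤ -ε := by
  obtain ⟨S, hS⟩ := hO.exists_bound_of_continuousOn (f := fun y => ∑ k, ‖r k y‖ ^ 2)
    (continuousOn_finsetSum _ fun k _ => (hr k).norm.pow 2)
  have hS₀ : 0 < |S| + 1 := by positivity
  refine ⟨θ * (c₀ ^ 2 / (|S| + 1)), by positivity, fun f c hc y hy P hP => ?_⟩
  have hrS : ∑ k, ‖r k y‖ ^ 2 ≤ |S| + 1 := by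
    linarith [le_abs_self S, (le_abs_self _).trans (hS y (subset_closure hy))]
  have hlower : c₀ ^ 2 / (|S| + 1) ≤ ∑ k, ‖P k‖ ^ 2 := by
    rw [div_le_iff₀' hS₀]
    calc c₀ ^ 2 ≤ c ^ 2 := by gcongr
      _ ≤ (∑ k, ‖r k y‖ ^ 2) * ∑ k, ‖P k‖ ^ 2 := hP.sq_le_sum_norm_sq_mul
      _ ≤ _ := by gcongr
  calc frameLaplacian P h y ≤ -θ * ∑ k, ‖P k‖ ^ 2 :=
        frameLaplacian_le_of_hessian_le hh.contDiffAt (hhess y)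
    _ ≤ -(θ * (c₀ ^ 2 / (|S| + 1))) := by linarith [mul_le_mul_of_nonneg_left hlower hθ.le]

namespace IsDualSolution

lemma contDiffAt_gradient (hs : IsDualSolution O r f c) (hy : y ∈ closure O) :
    ContDiffAt ℝ 3 (∇ f) y :=
  LorentzDual.contDiffAt_gradient (hs.contDiffAt y hy) three_add_one_eq_four.le

lemma continuousOn_hessian (hs : IsDualSolution O r f c) :
    ContinuousOn (fderiv ℝ (∇ f)) (closure O) := fun _ hy =>
  ((hs.contDiffAt_gradient hy).fderiv_right two_add_one_eq_three.le).continuousAt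
    |>.continuousWithinAt

lemma norm_sq_le_of_mem_closure (hs : IsDualSolution O r f c) (hy : y ∈ closure O) (v : E) :
    ‖v‖ ^ 2 ≤ c * ⟪v, fderiv ℝ (∇ f) y v⟫ := by
  refine ContinuousWithinAt.closure_le hy continuousWithinAt_const (g := fun z =>
    c * ⟪v, fderiv ℝ (∇ f) z v⟫) ?_ fun z hz => hs.coercive z hz v
  have := (hs.continuousOn_hessian y hy).mono subset_closure
  exact continuousWithinAt_const.mul
    (continuousWithinAt_const.inner (this.clm_apply continuousWithinAt_const))

lemma norm_frameLaplacian_comp_gradientJet_le (hO : IsOpen O) (hs : IsDualSolution O r f c)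
    (hy : y ∈ O) {P : κ → E} (hP : IsInverseFrame r f c y P)
    (hr : ∀ k, DifferentiableAt ℝ (r k) y) {Φ : E × E × E → ℝ} (hΦ : ContDiff ℝ 2 Φ) {e : E}
    {M R : ℝ} (hR : ∀ k, HasC2BoundAt (r k) R y) (hM : HasC2BoundAt Φ M (gradientJet e f y))
    (hR₀ : 0 ≤ R) (hc : c ≤ c₁) :
    ‖frameLaplacian P (fun z => Φ (gradientJet e f z)) y‖ ≤
      ∑ _k : κ, M * (c₁ + R) * (c₁ + R) + M * (2 * ∑ _k : κ, R * c₁) := by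
  have hf := hs.contDiffAt y (subset_closure hy)
  have hPc (k : κ) : ‖P k‖ ≤ c₁ := (hP.norm_le hs hy k).trans hc
  have hc₁ : 0 ≤ c₁ := hs.const_pos.le.trans hc
  refine norm_frameLaplacian_comp_le hΦ.contDiffAt
    (contDiffAt_gradientJet hf (m := 2) (by norm_num) e) hM (fun k => ?_) ?_
  · rw [dirDeriv_gradientJet (hf.of_le (by norm_num)), dirDeriv, hP.hessian_apply]
    simp only [Prod.norm_def, norm_zero]
    exact max_le (by positivity) (max_le (by linarith [hPc k]) (by linarith [(hR k).norm_le]))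
  · rw [norm_frameLaplacian_gradientJet (hf.of_le (by norm_num))]
    refine (hs.norm_frameLaplacian_gradient_le hO hy hP hr).trans ?_
    gcongr with k
    exacts [(hR k).norm_fderiv_le, hPc k]

end IsDualSolution

namespace IsSecondBoundarySolution

lemma mapsTo_closure (hs : IsSecondBoundarySolution O Ω r f c) :
    MapsTo (∇ f) (closure O) (closure Ω) := by
  rw [closure_eq_self_union_frontier, closure_eq_self_union_frontier]
  exact hs.mapsTo.union_union hs.mapsTo_frontier

lemma gradientJet_mem (hs : IsSecondBoundarySolution O Ω r f c) (hy : y ∈ closure O) {e : E}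
    (he : ‖e‖ ≤ 1) : gradientJet e f y ∈ Metric.closedBall 0 1 ×ˢ (closure O ×ˢ closure Ω) :=
  ⟨by simp [gradientJet, he], hy, hs.mapsTo_closure hy⟩

lemma exists_norm_frameLaplacian_comp_gradientJet_le [ProperSpace E] (hO : IsOpen O)
    (hOc : IsCompact (closure O)) (hΩc : IsCompact (closure Ω))
    (hr : ∀ k, ∀ y ∈ closure O, ContDiffAt ℝ 2 (r k) y) {Φ : E × E × E → ℝ}
    (hΦ : ContDiff ℝ 2 Φ) (c₁ : ℝ) :
    ∃ B, 0 ≤ B ∧ ∀ f c, IsSecondBoundarySolution O Ω r f c → c ≤ c₁ → ∀ y ∈ O, ∀ P,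
      IsInverseFrame r f c y P → ∀ e, ‖e‖ ≤ 1 →
        |frameLaplacian P (fun z => Φ (gradientJet e f z)) y| ≤ B := by
  obtain ⟨R, hR₀, hR⟩ := exists_forall_hasC2BoundAt hOc hr
  obtain ⟨M, -, hM⟩ := exists_hasC2BoundAt
    ((isCompact_closedBall 0 1).prod (hOc.prod hΩc)) fun _ _ => hΦ.contDiffAt
  refine ⟨|∑ _k : κ, M * (c₁ + R) * (c₁ + R) + M * (2 * ∑ _k : κ, R * c₁)|, abs_nonneg _,
    fun f c hs hc y hy P hP e he => le_trans ?_ (le_abs_self _)⟩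
  have hyc := subset_closure hy
  exact hs.norm_frameLaplacian_comp_gradientJet_le hO hy hP
    (fun k => (hr k y hyc).differentiableAt two_ne_zero) hΦ (hR y hyc)
    (hM _ (hs.gradientJet_mem hyc he)) hR₀ hc

lemma exists_abs_dirDeriv_comp_gradientJet_le [ProperSpace E] (hOc : IsCompact (closure O))
    (hΩc : IsCompact (closure Ω)) {Φ : E × E × E → ℝ} (hΦ : ContDiff ℝ 2 Φ) {a : ℝ} :
    ∃ B, 0 ≤ B ∧ ∀ f c, IsSecondBoundarySolution O Ω r f c → ∀ y ∈ closure O, ∀ e v, ‖e‖ ≤ 1 →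
      ‖v‖ ≤ a → ‖fderiv ℝ (∇ f) y v‖ ≤ a → |∂[v] (fun z => Φ (gradientJet e f z)) y| ≤ B := by
  obtain ⟨M, hM₀, hM⟩ := exists_hasC2BoundAt
    ((isCompact_closedBall 0 1).prod (hOc.prod hΩc)) fun _ _ => hΦ.contDiffAt
  refine ⟨M * |a|, by positivity, fun f c hs y hy e v he hv hAv => ?_⟩
  have hf := hs.contDiffAt y hy
  rw [dirDeriv_comp (hΦ.contDiffAt.differentiableAt two_ne_zero)
      ((contDiffAt_gradientJet hf (m := 2) (by norm_num) e).differentiableAt two_ne_zero),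
    dirDeriv_gradientJet (hf.of_le (by norm_num))]
  refine (fderiv ℝ Φ _).le_of_opNorm_le_of_le (hM _ (hs.gradientJet_mem hy he)).norm_fderiv_le ?_
  simp only [Prod.norm_def, norm_zero]
  exact max_le (abs_nonneg a)
    (max_le (hv.trans (le_abs_self a)) (hAv.trans (le_abs_self a)))

end IsSecondBoundarySolution

end SecondBoundaryProblem

section BoundaryEstimates

variable {E κ : Type*} [Fintype κ] [NormedAddCommGroup E] [InnerProductSpace ℝ E] [CompleteSpace E]
  {O Ω : Set E} {r : κ → E → E} {f h g : E → ℝ} {c c₀ c₁ θ θ' C : ℝ} {y : E}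

lemma gradient_comp_gradient (hf : ContDiffAt ℝ 2 f y) (hg : DifferentiableAt ℝ g (∇ f y)) :
    ∇ (fun z => g (∇ f z)) y = fderiv ℝ (∇ f) y (∇ g (∇ f y)) :=
  ext_inner_right ℝ fun v => by
    rw [fderiv_gradient_isSymmetric hf, ← dirDeriv_comp_gradient hf hg]
    exact inner_gradient_left

namespace IsSecondBoundarySolution

lemma contDiffAt_comp_gradient (hs : IsSecondBoundarySolution O Ω r f c) (hg : ContDiff ℝ 3 g)
    (hy : y ∈ closure O) : ContDiffAt ℝ 3 (fun z => g (∇ f z)) y :=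
  hg.contDiffAt.comp y (hs.contDiffAt_gradient hy)

lemma comp_gradient_eq_zero (hs : IsSecondBoundarySolution O Ω r f c)
    (hg : IsConvexDefiningFunction Ω g θ') (hy : y ∈ frontier O) : g (∇ f y) = 0 :=
  hg.eq_zero_of_mem_frontier (hs.mapsTo_frontier hy)

lemma comp_gradient_le_of_pos (hs : IsSecondBoundarySolution O Ω r f c)
    (hh : IsConvexDefiningFunction O h θ) (hg : IsConvexDefiningFunction Ω g θ')
    (hy : y ∈ frontier O) {z : E} (hz : 0 < h z) : g (∇ f y) ≤ g (∇ f z) := by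
  rw [hs.comp_gradient_eq_zero hg hy]
  exact (hg.pos_iff.2 (hs.mapsTo (hh.pos_iff.1 hz))).le

lemma exists_comp_gradient_le [ProperSpace E] (hh : IsConvexDefiningFunction O h θ)
    (hg : IsConvexDefiningFunction Ω g θ') (hr : ∀ k, ∀ y ∈ closure O, ContDiffAt ℝ 2 (r k) y)
    (hc₀ : 0 < c₀) (c₁ : ℝ) :
    ∃ C, 0 ≤ C ∧ ∀ f c, IsSecondBoundarySolution O Ω r f c → c ∈ Icc c₀ c₁ →
      ∀ z ∈ closure O, g (∇ f z) ≤ C * h z := by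
  have hh₂ : ContDiff ℝ 2 h := hh.contDiff.of_le (by norm_num)
  have hg₂ : ContDiff ℝ 2 g := hg.contDiff.of_le (by norm_num)
  obtain ⟨ε, hε, hεP⟩ := IsInverseFrame.exists_frameLaplacian_le hh.isCompact_closure
    (fun k y hy => (hr k y hy).continuousAt.continuousWithinAt) hh₂ hh.const_pos hh.hessian_le hc₀
  obtain ⟨B, hB, hBP⟩ := exists_norm_frameLaplacian_comp_gradientJet_le hh.isOpen
    hh.isCompact_closure hg.isCompact_closure hr (Φ := fun p => g p.2.2)
    (hg₂.comp (contDiff_snd.comp contDiff_snd)) c₁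
  refine ⟨B / ε + 1, by positivity, fun f c hs hc z hz => ?_⟩
  refine (le_add_mul_of_neg_le_frameLaplacian (κ := κ) (m := 0) hh.isOpen hh.isCompact_closure hh₂
    (fun y hy => (hs.contDiffAt_comp_gradient hg.contDiff hy).of_le (by norm_num)) hε hB ?_
    (fun y hy => hh.eq_zero_of_mem_frontier hy) (fun y hy => (hs.comp_gradient_eq_zero hg hy).le)
    z hz).trans_eq (zero_add _)
  intro y hy
  obtain ⟨P, hP⟩ := hs.exists_frame y hy
  exact ⟨P, hεP f c hc.1 y hy P hP, neg_le_of_abs_le (hBP f c hs hc.2 y hy P hP 0 (by simp))⟩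

lemma hessian_apply_normal (hs : IsSecondBoundarySolution O Ω r f c)
    (hh : IsConvexDefiningFunction O h θ) (hg : IsConvexDefiningFunction Ω g θ')
    (hy : y ∈ frontier O) :
    fderiv ℝ (∇ f) y (∇ g (∇ f y)) = (∂[∇ h y] (fun z => g (∇ f z)) y) • ∇ h y := by
  have hyc := frontier_subset_closure hy
  rw [← gradient_comp_gradient ((hs.contDiffAt y hyc).of_le (by norm_num))
    (hg.contDiff.differentiable (by norm_num) _)]
  exact gradient_eq_smul_of_boundary_min (hh.contDiff.contDiffAt.of_le (by norm_num))
    ((hs.contDiffAt_comp_gradient hg.contDiff hyc).of_le (by norm_num))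
    (hh.eq_zero_of_mem_frontier hy) (hh.norm_gradient y hy) fun z hz =>
      hs.comp_gradient_le_of_pos hh hg hy hz

lemma dirDeriv_normal_comp_gradient_mem_Icc (hs : IsSecondBoundarySolution O Ω r f c)
    (hh : IsConvexDefiningFunction O h θ) (hg : IsConvexDefiningFunction Ω g θ')
    (hC : ∀ z ∈ closure O, g (∇ f z) ≤ C * h z) (hy : y ∈ frontier O) :
    ∂[∇ h y] (fun z => g (∇ f z)) y ∈ Icc 0 C := by
  have hyc := frontier_subset_closure hy
  have hh₀ := hh.eq_zero_of_mem_frontier hy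
  have hν : ∂[∇ h y] h y = 1 := dirDeriv_gradient_self (hh.norm_gradient y hy)
  have hhd : DifferentiableAt ℝ h y := hh.contDiff.differentiable (by norm_num) y
  have hGd := (hs.contDiffAt_comp_gradient hg.contDiff hyc).differentiableAt (by norm_num)
  constructor
  · simpa [dirDeriv] using dirDeriv_le_of_le_of_pos hhd (differentiableAt_const (g (∇ f y))) hGd
      hh₀ (hν ▸ one_pos) rfl fun z hz => hs.comp_gradient_le_of_pos hh hg hy hz
  · have := dirDeriv_le_of_le_of_pos hhd hGd (hhd.const_mul C) hh₀ (hν ▸ one_pos)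
      (by rw [hs.comp_gradient_eq_zero hg hy, hh₀, mul_zero]) fun z hz =>
        hC z (subset_closure (hh.pos_iff.1 hz))
    have hCh : ∂[∇ h y] (fun z => C * h z) y = C * ∂[∇ h y] h y := by
      rw [dirDeriv, fderiv_const_mul hhd]; rfl
    rwa [hCh, hν, mul_one] at this

lemma exists_le_inner_gradient (hh : IsConvexDefiningFunction O h θ)
    (hg : IsConvexDefiningFunction Ω g θ') (hC₀ : 0 ≤ C) (hc₁ : 0 < c₁) :
    ∃ σ, 0 < σ ∧ ∀ f c, IsSecondBoundarySolution O Ω r f c → c ≤ c₁ →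
      (∀ z ∈ closure O, g (∇ f z) ≤ C * h z) →
        ∀ y ∈ frontier O, σ ≤ ⟪∇ g (∇ f y), ∇ h y⟫ := by
  refine ⟨((C + 1) * c₁)⁻¹, by positivity, fun f c hs hc hC y hy => ?_⟩
  obtain ⟨hμ₀, hμC⟩ := hs.dirDeriv_normal_comp_gradient_mem_Icc hh hg hC hy
  have hcoercive := hs.norm_sq_le_of_mem_closure (frontier_subset_closure hy) (∇ g (∇ f y))
  rw [hs.hessian_apply_normal hh hg hy, hg.norm_gradient _ (hs.mapsTo_frontier hy),
    real_inner_smul_right, one_pow, ← mul_assoc] at hcoercive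
  set μ := ∂[∇ h y] (fun z => g (∇ f z)) y
  have hcμ : c * μ ≤ (C + 1) * c₁ := by
    rw [mul_comm]
    exact mul_le_mul (by linarith) hc hs.const_pos.le (by positivity)
  have hinner : 0 ≤ ⟪∇ g (∇ f y), ∇ h y⟫ := by
    by_contra! hneg
    linarith [mul_nonpos_of_nonneg_of_nonpos (mul_nonneg hs.const_pos.le hμ₀) hneg.le]
  rw [inv_le_iff_one_le_mul₀' (by positivity)]
  exact hcoercive.trans (by gcongr)

end IsSecondBoundarySolution

end BoundaryEstimates

section Correction

/-- A smooth function on the whole line which equals `d⁻¹` for `d ≥ σ`. -/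
def cutoffInv (σ d : ℝ) : ℝ := Real.smoothTransition (2 * d / σ - 1) / d

lemma contDiff_cutoffInv {σ : ℝ} (hσ : 0 < σ) : ContDiff ℝ ∞ (cutoffInv σ) := by
  rw [contDiff_iff_contDiffAt]
  intro d
  rcases eq_or_ne d 0 with rfl | hd
  · refine contDiffAt_const (c := (0 : ℝ)) |>.congr_of_eventuallyEq ?_
    filter_upwards [Iio_mem_nhds (half_pos hσ)] with t ht
    rw [cutoffInv, Real.smoothTransition.zero_of_nonpos, zero_div]
    rw [sub_nonpos, div_le_one hσ]
    linarith [mem_Iio.1 ht]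
  · have : ContDiff ℝ ∞ fun d : ℝ => Real.smoothTransition (2 * d / σ - 1) :=
      Real.smoothTransition.contDiff.comp (by fun_prop)
    exact this.contDiffAt.div contDiffAt_id hd

lemma cutoffInv_of_le {σ d : ℝ} (hσ : 0 < σ) (hd : σ ≤ d) : cutoffInv σ d = d⁻¹ := by
  rw [cutoffInv, Real.smoothTransition.one_of_one_le, one_div]
  rw [le_sub_iff_add_le, le_div_iff₀ hσ]
  linarith

variable {E : Type*} [NormedAddCommGroup E] [InnerProductSpace ℝ E]

section

variable [CompleteSpace E]

/-- At a boundary point `y` with normal `ν = ∇h(y)` and oblique direction `β = ∇g(p)`, the function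
`2⟪e, ν⟫⟪e, β⟫ / ⟪β, ν⟫ - K⟪e, ν⟫²` of `(e, y, p)`. It compares the second derivative in an
arbitrary direction `e` with those in tangential directions (see `inner_map_add_correction_le`), and
the cutoff makes it smooth away from the boundary. -/
def obliqueCorrection (g h : E → ℝ) (σ K : ℝ) (p : E × E × E) : ℝ :=
  2 * (⟪p.1, ∇ h p.2.1⟫ * ⟪p.1, ∇ g p.2.2⟫) * cutoffInv σ ⟪∇ g p.2.2, ∇ h p.2.1⟫ -
    K * ⟪p.1, ∇ h p.2.1⟫ ^ 2

lemma contDiff_obliqueCorrection {g h : E → ℝ} {σ : ℝ} (hg : ContDiff ℝ 3 g)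
    (hh : ContDiff ℝ 3 h) (hσ : 0 < σ) (K : ℝ) : ContDiff ℝ 2 (obliqueCorrection g h σ K) := by
  have hgrad {q : E → ℝ} (hq : ContDiff ℝ 3 q) : ContDiff ℝ 2 (∇ q) :=
    contDiff_iff_contDiffAt.2 fun _ => contDiffAt_gradient hq.contDiffAt two_add_one_eq_three.le
  have he : ContDiff ℝ 2 fun p : E × E × E => p.1 := contDiff_fst
  have hν : ContDiff ℝ 2 fun p : E × E × E => ∇ h p.2.1 :=
    (hgrad hh).comp (contDiff_fst.comp contDiff_snd)
  have hβ : ContDiff ℝ 2 fun p : E × E × E => ∇ g p.2.2 :=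
    (hgrad hg).comp (contDiff_snd.comp contDiff_snd)
  have hcut : ContDiff ℝ 2 (cutoffInv σ) := contDiff_infty.1 (contDiff_cutoffInv hσ) 2
  exact ((contDiff_const.mul ((he.inner ℝ hν).mul (he.inner ℝ hβ))).mul
    (hcut.comp (hβ.inner ℝ hν))).sub (contDiff_const.mul ((he.inner ℝ hν).pow 2))

lemma obliqueCorrection_of_inner_eq_zero {g h : E → ℝ} {σ K : ℝ} {e y p : E}
    (he : ⟪e, ∇ h y⟫ = 0) : obliqueCorrection g h σ K (e, y, p) = 0 := by
  simp [obliqueCorrection, he]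

end

variable {A : E →L[ℝ] E} {e s β ν : E} {σ μ k C M : ℝ}

lemma inner_map_self_le_mul_norm_sq
    (hM : ∀ s, ‖s‖ = 1 → ⟪s, ν⟫ = 0 → ⟪s, A s⟫ ≤ M) (hs : ⟪s, ν⟫ = 0) :
    ⟪s, A s⟫ ≤ M * ‖s‖ ^ 2 := by
  rcases eq_or_ne s 0 with rfl | hs₀
  · simp
  · have hpos : 0 < ‖s‖ ^ 2 := by positivity
    have := hM (‖s‖⁻¹ • s) (norm_smul_inv_norm hs₀) (by rw [real_inner_smul_left, hs, mul_zero])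
    rw [map_smul, real_inner_smul_left, real_inner_smul_right, ← mul_assoc, ← mul_inv, ← sq,
      inv_mul_le_iff₀ hpos] at this
    linarith

lemma inner_map_sub_smul (hA : ∀ v w, ⟪A v, w⟫ = ⟪v, A w⟫) (hAβ : A β = μ • ν)
    (hk : ⟪e, ν⟫ = k * ⟪β, ν⟫) :
    ⟪e - k • β, A (e - k • β)⟫ = ⟪e, A e⟫ - k ^ 2 * (μ * ⟪β, ν⟫) := by
  rw [map_sub, map_smul, inner_sub_left, inner_sub_right, inner_sub_right, real_inner_smul_left,
    real_inner_smul_left, real_inner_smul_right, real_inner_smul_right, ← hA β e, hAβ,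
    real_inner_smul_left, real_inner_smul_right, real_inner_smul_right, real_inner_comm e ν, hk]
  ring

/-- Subtracting from `e` the multiple of `β` that makes it tangential costs no mixed terms, since
`A β` is normal. -/
lemma inner_map_add_correction_le (hA : ∀ v w, ⟪A v, w⟫ = ⟪v, A w⟫) (hAβ : A β = μ • ν)
    (hσ : 0 < σ) (hσβ : σ ≤ ⟪β, ν⟫) (hμ : μ ∈ Icc 0 C) (hβ : ‖β‖ = 1) (hν : ‖ν‖ = 1)
    (he : ‖e‖ = 1) (hM₁ : 1 ≤ M) (hM : ∀ s, ‖s‖ = 1 → ⟪s, ν⟫ = 0 → ⟪s, A s⟫ ≤ M) :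
    ⟪e, A e⟫ + M * (2 * (⟪e, ν⟫ * ⟪e, β⟫) * ⟪β, ν⟫⁻¹ - (1 + C) / σ ^ 2 * ⟪e, ν⟫ ^ 2) ≤ M := by
  have hd : 0 < ⟪β, ν⟫ := hσ.trans_le hσβ
  have hd₁ : ⟪β, ν⟫ ≤ 1 := by simpa [hβ, hν] using real_inner_le_norm β ν
  obtain ⟨k, hk⟩ : ∃ k, ⟪e, ν⟫ = k * ⟪β, ν⟫ := ⟨⟪e, ν⟫ / ⟪β, ν⟫, by field_simp⟩
  have htang : ⟪e - k • β, ν⟫ = 0 := by rw [inner_sub_left, real_inner_smul_left, hk, sub_self]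
  have hnorm : ‖e - k • β‖ ^ 2 = 1 - 2 * (k * ⟪e, β⟫) + k ^ 2 := by
    rw [norm_sub_sq_real, real_inner_smul_right, norm_smul, he, hβ, mul_one, Real.norm_eq_abs,
      sq_abs, one_pow]
  have hquad := inner_map_self_le_mul_norm_sq hM htang
  rw [hnorm, inner_map_sub_smul hA hAβ hk] at hquad
  have hC : 0 ≤ C := hμ.1.trans hμ.2
  have hμC : μ * ⟪β, ν⟫ ≤ M * C :=
    calc μ * ⟪β, ν⟫ ≤ C * 1 := mul_le_mul hμ.2 hd₁ hd.le hC
      _ ≤ M * C := by rw [mul_one]; exact le_mul_of_one_le_left hC hM₁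
  have hnormal : k ^ 2 * (M + μ * ⟪β, ν⟫) ≤ M * ((1 + C) / σ ^ 2 * ⟪e, ν⟫ ^ 2) := by
    calc k ^ 2 * (M + μ * ⟪β, ν⟫)
        ≤ k ^ 2 * (M + M * C) := mul_le_mul_of_nonneg_left (by linarith) (sq_nonneg k)
      _ = M * ((1 + C) / σ ^ 2 * (k * σ) ^ 2) := by field_simp
      _ ≤ _ := by
          rw [hk, mul_pow, mul_pow]
          gcongr
  have hcross : 2 * (⟪e, ν⟫ * ⟪e, β⟫) * ⟪β, ν⟫⁻¹ = 2 * (k * ⟪e, β⟫) := by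
    rw [hk]; field_simp
  rw [hcross]
  linarith

end Correction

section TangentialEstimate

variable {E κ : Type*} [Fintype κ] [NormedAddCommGroup E] [InnerProductSpace ℝ E] [CompleteSpace E]
  {O Ω : Set E} {r : κ → E → E} {f h g : E → ℝ} {c c₀ c₁ θ θ' C : ℝ} {y : E}

lemma le_div_of_mul_sq_le {a b t x z : ℝ} (ht : 0 < t) (hb : 0 ≤ b) (hx : 1 ≤ x) (hxz : x ≤ z)
    (h : t * z ^ 2 ≤ a * x + b) : x ≤ (a + b) / t := by
  have hx₀ : 0 < x := one_pos.trans_le hx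
  rw [le_div_iff₀' ht]
  refine le_of_mul_le_mul_right ?_ hx₀
  calc t * x * x = t * x ^ 2 := by ring
    _ ≤ t * z ^ 2 := by gcongr
    _ ≤ a * x + b * x := h.trans (add_le_add_right (le_mul_of_one_le_right hb hx) _)
    _ = (a + b) * x := by ring

namespace IsSecondBoundarySolution

lemma dirDeriv_dirDeriv_add_obliqueCorrection_le (hs : IsSecondBoundarySolution O Ω r f c)
    (hh : IsConvexDefiningFunction O h θ) (hg : IsConvexDefiningFunction Ω g θ')
    (hC : ∀ z ∈ closure O, g (∇ f z) ≤ C * h z) {σ : ℝ} (hσ : 0 < σ)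
    (hσβ : ∀ y ∈ frontier O, σ ≤ ⟪∇ g (∇ f y), ∇ h y⟫) {e : E} (he : ‖e‖ = 1) {M : ℝ}
    (hM₁ : 1 ≤ M) (hM : ∀ p ∈ unitTangents O h, ⟪p.2, fderiv ℝ (∇ f) p.1 p.2⟫ ≤ M)
    (hy : y ∈ frontier O) :
    ∂[e] (∂[e] f) y + M * obliqueCorrection g h σ ((1 + C) / σ ^ 2) (gradientJet e f y) ≤ M := by
  have hf : ContDiffAt ℝ 2 f y :=
    (hs.contDiffAt y (frontier_subset_closure hy)).of_le (by norm_num)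
  rw [← inner_fderiv_gradient hf, real_inner_comm, gradientJet, obliqueCorrection,
    cutoffInv_of_le hσ (hσβ y hy)]
  exact inner_map_add_correction_le (fderiv_gradient_isSymmetric hf)
    (hs.hessian_apply_normal hh hg hy) hσ (hσβ y hy)
    (hs.dirDeriv_normal_comp_gradient_mem_Icc hh hg hC hy)
    (hg.norm_gradient _ (hs.mapsTo_frontier hy)) (hh.norm_gradient y hy) he hM₁
    fun s hs₁ hsν => hM (y, s) ⟨hy, hs₁, hsν⟩

lemma norm_hessian_apply_normal_le (hs : IsSecondBoundarySolution O Ω r f c)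
    (hh : IsConvexDefiningFunction O h θ) (hg : IsConvexDefiningFunction Ω g θ')
    (hC : ∀ z ∈ closure O, g (∇ f z) ≤ C * h z) (hy : y ∈ frontier O) :
    ‖fderiv ℝ (∇ f) y (∇ g (∇ f y))‖ ≤ C := by
  obtain ⟨hμ₀, hμC⟩ := hs.dirDeriv_normal_comp_gradient_mem_Icc hh hg hC hy
  rwa [hs.hessian_apply_normal hh hg hy, norm_smul, hh.norm_gradient y hy, mul_one,
    Real.norm_of_nonneg hμ₀]

/-- Differentiating `g ∘ ∇f = 0` twice along the boundary turns the strict concavity of `g` into a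
quadratic lower bound. -/
lemma mul_norm_hessian_apply_sq_le (hs : IsSecondBoundarySolution O Ω r f c)
    (hh : IsConvexDefiningFunction O h θ) (hg : IsConvexDefiningFunction Ω g θ')
    (hC : ∀ z ∈ closure O, g (∇ f z) ≤ C * h z) {K : ℝ} (hK : HasC2BoundAt h K y) (hK₀ : 0 ≤ K)
    (hy : y ∈ frontier O) {e : E} (he : ‖e‖ = 1) (heν : ⟪e, ∇ h y⟫ = 0) :
    θ' * ‖fderiv ℝ (∇ f) y e‖ ^ 2 ≤
      ∂[∇ g (∇ f y)] (∂[e] (∂[e] f)) y + 2 * (K + 1) * C := by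
  have hyc := frontier_subset_closure hy
  have hh₂ : ContDiffAt ℝ 2 h y := hh.contDiff.contDiffAt.of_le (by norm_num)
  have hhess : -∂[e] (∂[e] h) y < 2 * (K + 1) := by
    rw [dirDeriv_dirDeriv hh₂]
    have := (neg_le_abs _).trans (((fderiv ℝ (fderiv ℝ h) y).le_opNorm₂ e e).trans_eq
      (by rw [he, mul_one, mul_one]))
    linarith [hK.norm_fderiv_fderiv_le]
  have hmin := dirDeriv_dirDeriv_nonneg_of_boundary_min hh₂
    ((hs.contDiffAt_comp_gradient hg.contDiff hyc).of_le (by norm_num))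
    (hh.eq_zero_of_mem_frontier hy) (hh.norm_gradient y hy)
    (fun z hz => hs.comp_gradient_le_of_pos hh hg hy hz) heν hhess
  rw [dirDeriv_dirDeriv_comp_gradient ((hs.contDiffAt y hyc).of_le (by norm_num))
    (hg.contDiff.contDiffAt.of_le (by norm_num))] at hmin
  have hnormal := mul_le_mul_of_nonneg_left
    (hs.dirDeriv_normal_comp_gradient_mem_Icc hh hg hC hy).2 (by positivity : 0 ≤ 2 * (K + 1))
  linarith [hg.hessian_le (∇ f y) (fderiv ℝ (∇ f) y e)]

variable [ProperSpace E]

lemma exists_neg_mul_le_frameLaplacian (hO : IsOpen O) (hOc : IsCompact (closure O))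
    (hΩc : IsCompact (closure Ω)) (hr : ∀ k, ∀ y ∈ closure O, ContDiffAt ℝ 2 (r k) y)
    {Φ : E × E × E → ℝ} (hΦ : ContDiff ℝ 2 Φ) (c₁ : ℝ) :
    ∃ N, 0 ≤ N ∧ ∀ f c, IsSecondBoundarySolution O Ω r f c → c ≤ c₁ → ∀ y ∈ O, ∀ P,
      IsInverseFrame r f c y P → ∀ e, ‖e‖ ≤ 1 → ∀ M, 1 ≤ M →
        -(N * M) ≤ frameLaplacian P
          (fun z => ∂[e] (∂[e] f) z + M * Φ (gradientJet e f z)) y := by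
  obtain ⟨R, hR₀, hR⟩ := exists_forall_hasC2BoundAt hOc hr
  obtain ⟨B, hB₀, hB⟩ := exists_norm_frameLaplacian_comp_gradientJet_le hO hOc hΩc hr hΦ c₁
  refine ⟨|∑ _k : κ, 2 * (R * c₁)| + B, by positivity,
    fun f c hs hc y hy P hP e he M hM => ?_⟩
  have hyc := subset_closure hy
  have hf := hs.contDiffAt y hyc
  have hinner (k : κ) : -(R * c₁) ≤ ⟪∂[e] (∂[e] (r k)) y, P k⟫ := by
    refine neg_le_of_abs_le ((abs_real_inner_le_norm _ _).trans ?_)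
    rw [dirDeriv_dirDeriv (hr k y hyc)]
    have hrk : ‖fderiv ℝ (fderiv ℝ (r k)) y e e‖ ≤ R * 1 * 1 :=
      ((fderiv ℝ (fderiv ℝ (r k)) y).le_opNorm₂ e e).trans (by
        gcongr; exact (hR y hyc k).norm_fderiv_fderiv_le)
    rw [mul_one, mul_one] at hrk
    exact mul_le_mul hrk ((hP.norm_le hs.toIsDualSolution hy k).trans hc) (norm_nonneg _) hR₀
  have hsecond : -∑ _k : κ, 2 * (R * c₁) ≤ frameLaplacian P (∂[e] (∂[e] f)) y := by
    refine le_trans ?_ (hs.two_mul_sum_inner_le_frameLaplacian_dirDeriv_dirDeriv hO hy hP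
      (fun k => hr k y hyc) e)
    rw [Finset.mul_sum, ← Finset.sum_neg_distrib]
    exact Finset.sum_le_sum fun k _ => by linarith [hinner k]
  have hq : ContDiffAt ℝ 2 (fun z => Φ (gradientJet e f z)) y :=
    hΦ.contDiffAt.comp y (contDiffAt_gradientJet hf (by norm_num) e)
  rw [frameLaplacian_add_const_mul (contDiffAt_dirDeriv
    (contDiffAt_dirDeriv hf three_add_one_eq_four.le e) two_add_one_eq_three.le e) hq]
  have hcorr := mul_le_mul_of_nonneg_left (neg_le_of_abs_le (hB f c hs hc y hy P hP e he))
    (zero_le_one.trans hM)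
  have habs := le_mul_of_one_le_right (abs_nonneg (∑ _k : κ, 2 * (R * c₁))) hM
  linarith [le_abs_self (∑ _k : κ, 2 * (R * c₁))]

lemma exists_le_add_mul_of_frontier_le (hh : IsConvexDefiningFunction O h θ)
    (hΩc : IsCompact (closure Ω)) (hr : ∀ k, ∀ y ∈ closure O, ContDiffAt ℝ 2 (r k) y)
    (hc₀ : 0 < c₀) (c₁ : ℝ) {Φ : E × E × E → ℝ} (hΦ : ContDiff ℝ 2 Φ) :
    ∃ N, 0 ≤ N ∧ ∀ f c, IsSecondBoundarySolution O Ω r f c → c ∈ Icc c₀ c₁ →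
      ∀ e, ‖e‖ ≤ 1 → ∀ M, 1 ≤ M →
        (∀ z ∈ frontier O, ∂[e] (∂[e] f) z + M * Φ (gradientJet e f z) ≤ M) →
          ∀ z ∈ O, ∂[e] (∂[e] f) z + M * Φ (gradientJet e f z) ≤ M + N * M * h z := by
  have hh₂ : ContDiff ℝ 2 h := hh.contDiff.of_le (by norm_num)
  obtain ⟨ε, hε, hεP⟩ := IsInverseFrame.exists_frameLaplacian_le hh.isCompact_closure
    (fun k y hy => (hr k y hy).continuousAt.continuousWithinAt) hh₂ hh.const_pos hh.hessian_le hc₀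
  obtain ⟨N, hN, hNP⟩ := exists_neg_mul_le_frameLaplacian hh.isOpen hh.isCompact_closure hΩc hr
    hΦ c₁
  refine ⟨N / ε + 1, by positivity, fun f c hs hc e he M hM hfrontier z hz => ?_⟩
  have hsmooth : ∀ y ∈ closure O,
      ContDiffAt ℝ 2 (fun z => ∂[e] (∂[e] f) z + M * Φ (gradientJet e f z)) y := fun y hy =>
    (contDiffAt_dirDeriv (contDiffAt_dirDeriv (hs.contDiffAt y hy) three_add_one_eq_four.le e)
      two_add_one_eq_three.le e).add (contDiffAt_const.mul (hΦ.contDiffAt.comp y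
        (contDiffAt_gradientJet (hs.contDiffAt y hy) (by norm_num) e)))
  refine (le_add_mul_of_neg_le_frameLaplacian (κ := κ) hh.isOpen hh.isCompact_closure hh₂
    hsmooth hε (by positivity : 0 ≤ N * M) (fun y hy => ?_)
    (fun y hy => hh.eq_zero_of_mem_frontier hy) hfrontier z (subset_closure hz)).trans ?_
  · obtain ⟨P, hP⟩ := hs.exists_frame y hy
    exact ⟨P, hεP f c hc.1 y hy P hP, hNP f c hs hc.2 y hy P hP e he M hM⟩
  · have hslope : N * M / ε + 1 ≤ (N / ε + 1) * M := by
      rw [add_mul, one_mul, div_mul_eq_mul_div]; gcongr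
    have := (hh.pos_iff.2 hz).le
    gcongr

lemma exists_dirDeriv_dirDeriv_dirDeriv_le (hh : IsConvexDefiningFunction O h θ)
    (hΩc : IsCompact (closure Ω)) (hr : ∀ k, ∀ y ∈ closure O, ContDiffAt ℝ 2 (r k) y)
    (hc₀ : 0 < c₀) (c₁ : ℝ) {Φ : E × E × E → ℝ} (hΦ : ContDiff ℝ 2 Φ) {a : ℝ} (ha : 1 ≤ a) :
    ∃ X, 0 ≤ X ∧ ∀ f c, IsSecondBoundarySolution O Ω r f c → c ∈ Icc c₀ c₁ →
      ∀ e, ‖e‖ ≤ 1 → ∀ M, 1 ≤ M →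
        (∀ z ∈ frontier O, ∂[e] (∂[e] f) z + M * Φ (gradientJet e f z) ≤ M) →
          ∀ y ∈ frontier O, ∂[e] (∂[e] f) y + M * Φ (gradientJet e f y) = M →
            ∀ v, ‖v‖ ≤ 1 → 0 < ⟪v, ∇ h y⟫ → ‖fderiv ℝ (∇ f) y v‖ ≤ a →
              ∂[v] (∂[e] (∂[e] f)) y ≤ X * M := by
  obtain ⟨N, hN, hNle⟩ := exists_le_add_mul_of_frontier_le hh hΩc hr hc₀ c₁ hΦ
  obtain ⟨B, hB, hBle⟩ := exists_abs_dirDeriv_comp_gradientJet_le (a := a) (r := r)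
    hh.isCompact_closure hΩc hΦ
  refine ⟨N + B, by positivity,
    fun f c hs hc e he M hM hfrontier y hy heq v hv hvν hAv => ?_⟩
  have hyc := frontier_subset_closure hy
  have hf := hs.contDiffAt y hyc
  have hh₀ := hh.eq_zero_of_mem_frontier hy
  have hhd : DifferentiableAt ℝ h y := hh.contDiff.differentiable (by norm_num) y
  have hF : DifferentiableAt ℝ (∂[e] (∂[e] f)) y :=
    (contDiffAt_dirDeriv (contDiffAt_dirDeriv hf three_add_one_eq_four.le e)
      two_add_one_eq_three.le e).differentiableAt two_ne_zero
  have hq : DifferentiableAt ℝ (fun z => Φ (gradientJet e f z)) y :=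
    (hΦ.contDiffAt.comp y (contDiffAt_gradientJet hf (m := 2) (by norm_num) e)).differentiableAt
      two_ne_zero
  have hderiv : ∂[v] (fun z => ∂[e] (∂[e] f) z + M * Φ (gradientJet e f z)) y ≤
      ∂[v] (fun z => M + N * M * h z) y :=
    dirDeriv_le_of_le_of_pos hhd (hF.add (hq.const_mul M))
      ((differentiableAt_const M).add (hhd.const_mul (N * M))) hh₀
      (by rwa [dirDeriv_eq_inner_gradient]) (by rw [heq, hh₀, mul_zero, add_zero])
      fun z hz => hNle f c hs hc e he M hM hfrontier z (hh.pos_iff.1 hz)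
  have hconst : ∂[v] (fun _ : E => M) y = 0 := by simp [dirDeriv]
  have hvν₁ : ⟪v, ∇ h y⟫ ≤ 1 := (real_inner_le_norm _ _).trans (by
    rwa [hh.norm_gradient y hy, mul_one])
  rw [dirDeriv_add_const_mul hF hq, dirDeriv_add_const_mul (differentiableAt_const M) hhd, hconst,
    dirDeriv_eq_inner_gradient (h := h) v, zero_add] at hderiv
  have hM₀ : 0 ≤ M := zero_le_one.trans hM
  have hbarrier := mul_le_of_le_one_right (mul_nonneg hN hM₀) hvν₁
  have hcorr := mul_le_mul_of_nonneg_left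
    (neg_le_of_abs_le (hBle f c hs y hyc e v he (hv.trans ha) hAv)) hM₀
  linarith

lemma exists_isMaxOn_unitTangents (hs : IsSecondBoundarySolution O Ω r f c)
    (hh : IsConvexDefiningFunction O h θ) (hne : (unitTangents O h).Nonempty) :
    ∃ p ∈ unitTangents O h,
      IsMaxOn (fun p => ⟪p.2, fderiv ℝ (∇ f) p.1 p.2⟫) (unitTangents O h) p := by
  have hA : ContinuousOn (fun p : E × E => fderiv ℝ (∇ f) p.1) (unitTangents O h) :=
    hs.continuousOn_hessian.comp continuousOn_fst fun p hp => frontier_subset_closure hp.1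
  exact hh.isCompact_unitTangents.exists_isMaxOn hne
    (continuousOn_snd.inner (hA.clm_apply continuousOn_snd))

theorem exists_inner_hessian_le (hh : IsConvexDefiningFunction O h θ)
    (hg : IsConvexDefiningFunction Ω g θ')
    (hr : ∀ k, ∀ y ∈ closure O, ContDiffAt ℝ 2 (r k) y) (hc₀ : 0 < c₀) (hc₁ : 0 < c₁) :
    ∃ D, 0 < D ∧ ∀ f c, IsSecondBoundarySolution O Ω r f c → c ∈ Icc c₀ c₁ →
      ∀ p ∈ unitTangents O h, ⟪p.2, fderiv ℝ (∇ f) p.1 p.2⟫ ≤ D := by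
  obtain ⟨C, hC₀, hC⟩ := exists_comp_gradient_le hh hg hr hc₀ c₁
  obtain ⟨σ, hσ, hσβ⟩ := exists_le_inner_gradient (r := r) hh hg hC₀ hc₁
  obtain ⟨X, hX₀, hX⟩ := exists_dirDeriv_dirDeriv_dirDeriv_le hh hg.isCompact_closure hr hc₀ c₁
    (contDiff_obliqueCorrection hg.contDiff hh.contDiff hσ ((1 + C) / σ ^ 2))
    (le_add_of_nonneg_left hC₀)
  obtain ⟨K, hK₀, hK⟩ := exists_hasC2BoundAt hh.isCompact_closure
    fun y _ => hh.contDiff.contDiffAt.of_le (by norm_num)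
  have hθ := hg.const_pos
  refine ⟨(X + 2 * (K + 1) * C) / θ' + 1, by positivity, fun f c hs hc p hp => ?_⟩
  obtain ⟨⟨y, e⟩, ⟨hy, he, heν⟩, hmax⟩ := hs.exists_isMaxOn_unitTangents hh ⟨p, hp⟩
  set M := ⟪e, fderiv ℝ (∇ f) y e⟫ with hM
  refine (hmax hp).trans ?_
  rcases le_total M 1 with hM₁ | hM₁
  · exact hM₁.trans (le_add_of_nonneg_left (by positivity))
  have hC' := hC f c hs hc
  have hf : ContDiffAt ℝ 2 f y :=
    (hs.contDiffAt y (frontier_subset_closure hy)).of_le (by norm_num)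
  have hβ := hg.norm_gradient _ (hs.mapsTo_frontier hy)
  have hthird := hX f c hs hc e he.le M hM₁
    (fun z hz => hs.dirDeriv_dirDeriv_add_obliqueCorrection_le hh hg hC' hσ
      (hσβ f c hs hc.2 hC') he hM₁ hmax hz) y hy
    (by rw [gradientJet, obliqueCorrection_of_inner_eq_zero heν, ← inner_fderiv_gradient hf, hM,
      real_inner_comm, mul_zero, add_zero])
    (∇ g (∇ f y)) hβ.le (hσ.trans_le (hσβ f c hs hc.2 hC' y hy))
    ((hs.norm_hessian_apply_normal_le hh hg hC' hy).trans (le_add_of_nonneg_right zero_le_one))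
  have hMle : M ≤ ‖fderiv ℝ (∇ f) y e‖ := by simpa [he] using real_inner_le_norm e _
  have hquad := (hs.mul_norm_hessian_apply_sq_le hh hg hC' (hK y (frontier_subset_closure hy)) hK₀
    hy he heν).trans (add_le_add_left hthird _)
  linarith [le_div_of_mul_sq_le hg.const_pos (by positivity) hM₁ hMle hquad]

end IsSecondBoundarySolution

end TangentialEstimate

section ConstantLowerBound

variable {E κ : Type*} [NormedAddCommGroup E] [InnerProductSpace ℝ E]
  {f : E → ℝ} {x₀ : E} {ρ L K : ℝ}

lemma dirDeriv_dirDeriv_const_mul_norm_sub_sq (a : ℝ) (x₀ e x : E) :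
    ∂[e] (∂[e] fun z => a * ‖z - x₀‖ ^ 2) x = 2 * a * ‖e‖ ^ 2 := by
  have hsub (z : E) : HasFDerivAt (fun z => z - x₀) (ContinuousLinearMap.id ℝ E) z :=
    (hasFDerivAt_id z).sub_const x₀
  have hfirst : ∂[e] (fun z => a * ‖z - x₀‖ ^ 2) = fun z => 2 * a * ⟪z - x₀, e⟫ := by
    funext z
    rw [dirDeriv, ((hsub z).norm_sq.const_mul a).fderiv]
    simp only [map_sub, ContinuousLinearMap.comp_id, smul_apply, sub_apply, coe_innerSL_apply,
      nsmul_eq_mul, Nat.cast_ofNat, smul_eq_mul, inner_sub_left]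
    ring
  rw [hfirst, dirDeriv, (((hsub x).inner ℝ (hasFDerivAt_const e x)).const_mul (2 * a)).fderiv]
  simp

variable [ProperSpace E]

/-- The Hessian bound holds where `K / 2 * ‖x - x₀‖ ^ 2 - f x` is minimal, and `2 * L < K * ρ` keeps
this point away from the sphere. -/
lemma exists_inner_hessian_le_of_norm_gradient_le (hρ : 0 < ρ)
    (hf : ∀ x ∈ Metric.closedBall x₀ ρ, ContDiffAt ℝ 2 f x)
    (hL : ∀ x ∈ Metric.closedBall x₀ ρ, ‖∇ f x‖ ≤ L) (hK : 2 * L < K * ρ) :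
    ∃ x ∈ Metric.ball x₀ ρ, ∀ e, ⟪e, fderiv ℝ (∇ f) x e⟫ ≤ K * ‖e‖ ^ 2 := by
  have hsq : ContDiff ℝ 2 fun z : E => K / 2 * ‖z - x₀‖ ^ 2 :=
    contDiff_const.mul ((contDiff_id.sub contDiff_const).norm_sq ℝ)
  have hq : ∀ x ∈ Metric.closedBall x₀ ρ,
      ContDiffAt ℝ 2 (fun z => K / 2 * ‖z - x₀‖ ^ 2 + (-1) * f z) x := fun x hx =>
    hsq.contDiffAt.add (contDiffAt_const.mul (hf x hx))
  have hx₀ : x₀ ∈ Metric.closedBall x₀ ρ := Metric.mem_closedBall_self hρ.le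
  obtain ⟨x, hx, hmin⟩ := (isCompact_closedBall x₀ ρ).exists_isMinOn ⟨x₀, hx₀⟩
    fun x hx => (hq x hx).continuousAt.continuousWithinAt
  have hdist : dist x x₀ < ρ := by
    refine (Metric.mem_closedBall.1 hx).lt_of_ne fun hsphere => ?_
    have hle := hmin hx₀
    have hlip := (convex_closedBall x₀ ρ).norm_image_sub_le_of_norm_fderiv_le (𝕜 := ℝ)
      (fun z hz => (hf z hz).differentiableAt two_ne_zero)
      (fun z hz => by simpa [gradient] using hL z hz) hx₀ hx
    rw [dist_eq_norm] at hsphere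
    simp only [mem_ofPred_eq, hsphere, sub_self, norm_zero] at hle hlip
    nlinarith [le_abs_self (f x - f x₀), Real.norm_eq_abs (f x - f x₀)]
  refine ⟨x, hdist, fun e => ?_⟩
  have hsecond := dirDeriv_dirDeriv_nonneg_of_isLocalMin (hq x hx)
    (hmin.isLocalMin (Metric.closedBall_mem_nhds_of_mem hdist)) e
  rw [dirDeriv_dirDeriv_add_const_mul hsq.contDiffAt (hf x hx),
    dirDeriv_dirDeriv_const_mul_norm_sub_sq, ← inner_fderiv_gradient (hf x hx),
    real_inner_comm] at hsecond
  linarith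

variable [Fintype κ]

lemma IsSecondBoundarySolution.exists_le_const [Nontrivial E] {O Ω : Set E} {r : κ → E → E}
    (hO : IsOpen O) (hne : O.Nonempty) (hΩ : Bornology.IsBounded Ω) :
    ∃ c₀, 0 < c₀ ∧ ∀ f c, IsSecondBoundarySolution O Ω r f c → c₀ ≤ c := by
  obtain ⟨x₀, hx₀⟩ := hne
  obtain ⟨ρ, hρ, hball⟩ := Metric.nhds_basis_closedBall.mem_iff.1 (hO.mem_nhds hx₀)
  obtain ⟨L, hL₀, hL⟩ := hΩ.exists_pos_norm_le
  refine ⟨((2 * L + 1) / ρ)⁻¹, by positivity, fun f c hs => ?_⟩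
  obtain ⟨x, hx, hhess⟩ := exists_inner_hessian_le_of_norm_gradient_le hρ
    (fun x hx => (hs.contDiffAt x (subset_closure (hball hx))).of_le (by norm_num))
    (fun x hx => hL _ (hs.mapsTo (hball hx)))
    (by rw [div_mul_cancel₀ _ hρ.ne']; linarith : 2 * L < (2 * L + 1) / ρ * ρ)
  obtain ⟨v, hv⟩ := exists_ne (0 : E)
  have hv₀ : 0 < ‖v‖ ^ 2 := by positivity
  have hle : 1 * ‖v‖ ^ 2 ≤ c * ((2 * L + 1) / ρ) * ‖v‖ ^ 2 := by
    rw [one_mul, mul_assoc]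
    exact (hs.coercive x (hball (Metric.ball_subset_closedBall hx)) v).trans
      (mul_le_mul_of_nonneg_left (hhess v) hs.const_pos.le)
  rw [inv_le_iff_one_le_mul₀ (by positivity)]
  exact le_of_mul_le_mul_right hle hv₀

end ConstantLowerBound

section LorentzFrame

lemma one_sub_norm_sq_pos {E : Type*} [SeminormedAddCommGroup E] {p : E} (hp : ‖p‖ < 1) :
    0 < 1 - ‖p‖ ^ 2 :=
  sub_pos.2 (pow_lt_one₀ (norm_nonneg p) hp two_ne_zero)

variable {E ι : Type*} [NormedAddCommGroup E] [InnerProductSpace ℝ E] [Fintype ι]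

/-- Vectors `rₖ(p)` such that `∑ₖ rₖ(p) ⊗ rₖ(p) = (I + p ⊗ p / (1 - |p|²)) / √(1 - |p|²)` is the
coefficient matrix of the Lorentz mean curvature operator in nondivergence form. -/
def lorentzFrame (b : OrthonormalBasis ι ℝ E) : Option ι → E → E
  | some i, p => (√√(1 - ‖p‖ ^ 2))⁻¹ • b i
  | none, p => (√√(1 - ‖p‖ ^ 2) * √(1 - ‖p‖ ^ 2))⁻¹ • p

variable (b : OrthonormalBasis ι ℝ E) {B : E →L[ℝ] E} {p : E}

lemma contDiffAt_lorentzFrame (hp : ‖p‖ < 1) {m : WithTop ℕ∞} (k : Option ι) :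
    ContDiffAt ℝ m (lorentzFrame b k) p := by
  have hpos : 0 < √(1 - ‖p‖ ^ 2) := Real.sqrt_pos.2 (one_sub_norm_sq_pos hp)
  have hsqrt : ContDiffAt ℝ m (fun p : E => √(1 - ‖p‖ ^ 2)) p :=
    (contDiffAt_const.sub (contDiffAt_id.norm_sq ℝ)).sqrt (one_sub_norm_sq_pos hp).ne'
  have hsqrt₂ := hsqrt.sqrt hpos.ne'
  cases k with
  | some i => exact (hsqrt₂.inv (Real.sqrt_pos.2 hpos).ne').smul contDiffAt_const
  | none => exact ((hsqrt₂.mul hsqrt).inv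
      (mul_pos (Real.sqrt_pos.2 hpos) hpos).ne').smul contDiffAt_id

lemma sum_inner_lorentzFrame (B : E →L[ℝ] E) (hp : ‖p‖ < 1) :
    ∑ k, ⟪lorentzFrame b k p, B (lorentzFrame b k p)⟫ =
      (∑ i, ⟪b i, B (b i)⟫) / √(1 - ‖p‖ ^ 2) + ⟪p, B p⟫ / √(1 - ‖p‖ ^ 2) ^ 3 := by
  have hv : 0 < √(1 - ‖p‖ ^ 2) := Real.sqrt_pos.2 (one_sub_norm_sq_pos hp)
  simp only [Fintype.sum_option, lorentzFrame, map_smul, real_inner_smul_left,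
    real_inner_smul_right, ← Finset.mul_sum]
  generalize √(1 - ‖p‖ ^ 2) = v at hv
  have hs := Real.sqrt_pos.2 hv
  rw [← Real.sq_sqrt hv.le, Real.sqrt_sq hs.le]
  field_simp
  ring

lemma sum_inner_basis_le (hB : ∀ v, 0 ≤ ⟪v, B v⟫) (hp : ‖p‖ < 1) :
    ∑ i, ⟪b i, B (b i)⟫ ≤ ∑ k, ⟪lorentzFrame b k p, B (lorentzFrame b k p)⟫ := by
  have hv : 0 < √(1 - ‖p‖ ^ 2) := Real.sqrt_pos.2 (one_sub_norm_sq_pos hp)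
  have hv₁ : √(1 - ‖p‖ ^ 2) ≤ 1 := Real.sqrt_le_one.2 (by linarith [sq_nonneg ‖p‖])
  rw [sum_inner_lorentzFrame b B hp]
  exact (le_div_self (Finset.sum_nonneg fun i _ => hB (b i)) hv hv₁).trans
    (le_add_of_nonneg_right (div_nonneg (hB p) (by positivity)))

lemma norm_map_sq_le_sum_inner_mul (hB : ∀ v w, ⟪B v, w⟫ = ⟪v, B w⟫) (hB₀ : ∀ v, 0 ≤ ⟪v, B v⟫)
    (w : E) : ‖B w‖ ^ 2 ≤ (∑ i, ⟪b i, B (b i)⟫) * ⟪w, B w⟫ := by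
  have hCS (v : E) : ⟪v, B w⟫ ^ 2 ≤ ⟪v, B v⟫ * ⟪w, B w⟫ :=
    LinearMap.BilinForm.apply_sq_le_of_symm ((innerₗ E).compl₂ B.toLinearMap) hB₀
      ⟨fun v w => by simpa [real_inner_comm] using (hB v w).symm⟩ v w
  rw [← b.sum_sq_inner_right, Finset.sum_mul]
  exact Finset.sum_le_sum fun i _ => hCS (b i)

end LorentzFrame

section LorentzMeanCurvature

variable {n : ℕ} {u : EuclideanSpace ℝ (Fin n) → ℝ} {x : EuclideanSpace ℝ (Fin n)}

lemma dirDeriv_div_sqrt_one_sub_norm_gradient_sq (hu : ContDiffAt ℝ 2 u x) (hx : ‖∇ u x‖ < 1)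
    (e : EuclideanSpace ℝ (Fin n)) :
    ∂[e] (fun y => ∂[e] u y / √(1 - ‖∇ u y‖ ^ 2)) x =
      ⟪e, fderiv ℝ (∇ u) x e⟫ / √(1 - ‖∇ u x‖ ^ 2) +
        ⟪e, ∇ u x⟫ * ⟪∇ u x, fderiv ℝ (∇ u) x e⟫ / √(1 - ‖∇ u x‖ ^ 2) ^ 3 := by
  have hpos := one_sub_norm_sq_pos hx
  have hv := Real.sqrt_pos.2 hpos
  have hgrad : HasFDerivAt (∇ u) (fderiv ℝ (∇ u) x) x :=
    ((contDiffAt_gradient hu one_add_one_eq_two.le).differentiableAt one_ne_zero).hasFDerivAt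
  have hsqrt := (hgrad.norm_sq.const_sub 1).sqrt hpos.ne'
  have hnum : HasFDerivAt (∂[e] u) (fderiv ℝ (∂[e] u) x) x :=
    ((contDiffAt_dirDeriv hu one_add_one_eq_two.le e).differentiableAt one_ne_zero).hasFDerivAt
  have hquot : HasFDerivAt (fun y => ∂[e] u y / √(1 - ‖∇ u y‖ ^ 2)) _ x :=
    hnum.mul ((hasDerivAt_inv hv.ne').comp_hasFDerivAt x hsqrt)
  have hnum_apply : fderiv ℝ (∂[e] u) x e = ⟪e, fderiv ℝ (∇ u) x e⟫ := by
    rw [real_inner_comm, inner_fderiv_gradient hu]; rfl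
  rw [dirDeriv, hquot.fderiv]
  simp [hnum_apply, dirDeriv_eq_inner_gradient]
  field_simp
  ring

lemma MOp_eq_sum_inner_lorentzFrame (hu : ContDiffAt ℝ 2 u x) (hx : ‖∇ u x‖ < 1) :
    MOp n u x = ∑ k, ⟪lorentzFrame (EuclideanSpace.basisFun (Fin n) ℝ) k (∇ u x),
      fderiv ℝ (∇ u) x (lorentzFrame (EuclideanSpace.basisFun (Fin n) ℝ) k (∇ u x))⟫ := by
  set b := EuclideanSpace.basisFun (Fin n) ℝ
  have hexpand : ∑ i, ⟪b i, ∇ u x⟫ * ⟪∇ u x, fderiv ℝ (∇ u) x (b i)⟫ =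
      ⟪∇ u x, fderiv ℝ (∇ u) x (∇ u x)⟫ := by
    have hsum := congrArg (fun w => ⟪∇ u x, fderiv ℝ (∇ u) x w⟫) (b.sum_repr' (∇ u x))
    simpa only [map_sum, map_smul, inner_sum, real_inner_smul_right] using hsum
  rw [sum_inner_lorentzFrame b _ hx, ← hexpand, Finset.sum_div, Finset.sum_div,
    ← Finset.sum_add_distrib]
  refine Finset.sum_congr rfl fun i _ => ?_
  rw [← dirDeriv_div_sqrt_one_sub_norm_gradient_sq hu hx, EuclideanSpace.basisFun_apply]
  rfl

end LorentzMeanCurvature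

end LorentzDual

section

open Filter Topology Set LorentzDual
open scoped ContDiff Gradient

variable {n : ℕ} {Ω Ω' : Set (EuclideanSpace ℝ (Fin n))}
  {u ut h : EuclideanSpace ℝ (Fin n) → ℝ} {c θ : ℝ} {x y : EuclideanSpace ℝ (Fin n)}

lemma IsUnifConvexDefFn.isConvexDefiningFunction (hh : IsUnifConvexDefFn n Ω h θ)
    (hΩ : Bornology.IsBounded Ω) : IsConvexDefiningFunction Ω h θ where
  contDiff := hh.1.of_le (ENat.LEInfty.out)
  eq_setOf_pos := hh.2.1
  norm_gradient := hh.2.2.1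
  const_pos := hh.2.2.2.1
  hessian_le := hh.2.2.2.2
  isCompact_closure := hΩ.isCompact_closure

lemma SmoothOnClosure.contDiffAt (hu : SmoothOnClosure n Ω u) (hx : x ∈ closure Ω) :
    ContDiffAt ℝ ∞ u x := by
  obtain ⟨U, hU, hsub, hu⟩ := hu
  exact hu.contDiffAt (hU.mem_nhds (hsub hx))

namespace IsSol

lemma contDiffAt (hu : IsSol n Ω Ω' u c) (hx : x ∈ closure Ω) : ContDiffAt ℝ 2 u x :=
  (hu.1.contDiffAt hx).of_le (ENat.LEInfty.out)

lemma differentiableAt_gradient (hu : IsSol n Ω Ω' u c) (hx : x ∈ closure Ω) :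
    DifferentiableAt ℝ (∇ u) x :=
  (contDiffAt_gradient (hu.contDiffAt hx) one_add_one_eq_two.le).differentiableAt one_ne_zero

lemma norm_gradient_lt_one (hu : IsSol n Ω Ω' u c) (hx : x ∈ closure Ω) : ‖∇ u x‖ < 1 :=
  hu.2.1 x hx

lemma inner_hessian_pos (hu : IsSol n Ω Ω' u c) (hx : x ∈ closure Ω)
    {v : EuclideanSpace ℝ (Fin n)} (hv : v ≠ 0) : 0 < ⟪v, fderiv ℝ (∇ u) x v⟫ :=
  hu.2.2.1 x hx v hv

lemma bijOn_gradient (hu : IsSol n Ω Ω' u c) : BijOn (∇ u) Ω Ω' :=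
  hu.2.2.2.1

lemma inner_hessian_nonneg (hu : IsSol n Ω Ω' u c) (hx : x ∈ closure Ω)
    (v : EuclideanSpace ℝ (Fin n)) : 0 ≤ ⟪v, fderiv ℝ (∇ u) x v⟫ := by
  obtain rfl | hv := eq_or_ne v 0
  · simp
  · exact (hu.inner_hessian_pos hx hv).le

lemma hessian_surjective (hu : IsSol n Ω Ω' u c) (hx : x ∈ closure Ω) :
    Function.Surjective (fderiv ℝ (∇ u) x) := by
  refine LinearMap.injective_iff_surjective.1
    ((injective_iff_map_eq_zero (fderiv ℝ (∇ u) x).toLinearMap).2 fun v hv => ?_)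
  by_contra hne
  have hpos := hu.inner_hessian_pos hx hne
  rw [show fderiv ℝ (∇ u) x v = 0 from hv, inner_zero_right] at hpos
  exact hpos.false

lemma sum_inner_lorentzFrame (hu : IsSol n Ω Ω' u c) (hx : x ∈ Ω) :
    ∑ k, ⟪lorentzFrame (EuclideanSpace.basisFun (Fin n) ℝ) k (∇ u x),
      fderiv ℝ (∇ u) x (lorentzFrame (EuclideanSpace.basisFun (Fin n) ℝ) k (∇ u x))⟫ = c := by
  rw [← MOp_eq_sum_inner_lorentzFrame (hu.contDiffAt (subset_closure hx))
    (hu.norm_gradient_lt_one (subset_closure hx))]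
  exact hu.2.2.2.2 x hx

lemma norm_hessian_apply_sq_le (hu : IsSol n Ω Ω' u c) (hx : x ∈ Ω)
    (w : EuclideanSpace ℝ (Fin n)) :
    ‖fderiv ℝ (∇ u) x w‖ ^ 2 ≤ c * ⟪w, fderiv ℝ (∇ u) x w⟫ := by
  have hxc := subset_closure hx
  have hnonneg := hu.inner_hessian_nonneg hxc
  refine (norm_map_sq_le_sum_inner_mul (EuclideanSpace.basisFun (Fin n) ℝ)
    (fderiv_gradient_isSymmetric (hu.contDiffAt hxc)) hnonneg w).trans ?_
  refine mul_le_mul_of_nonneg_right ?_ (hnonneg w)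
  rw [← hu.sum_inner_lorentzFrame hx]
  exact sum_inner_basis_le _ hnonneg (hu.norm_gradient_lt_one hxc)

lemma const_pos [Nontrivial (EuclideanSpace ℝ (Fin n))] (hu : IsSol n Ω Ω' u c)
    (hne : Ω.Nonempty) : 0 < c := by
  obtain ⟨x, hx⟩ := hne
  obtain ⟨v, hv⟩ := exists_ne (0 : EuclideanSpace ℝ (Fin n))
  have hpos := hu.inner_hessian_pos (subset_closure hx) hv
  have hmap : fderiv ℝ (∇ u) x v ≠ 0 := fun h => by simp [h] at hpos
  have hmap_pos : 0 < ‖fderiv ℝ (∇ u) x v‖ ^ 2 := by positivity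
  exact pos_of_mul_pos_left (hmap_pos.trans_le (hu.norm_hessian_apply_sq_le hx v)) hpos.le

lemma exists_const_le (hΩ : IsOpen Ω) (hne : Ω.Nonempty) (hΩ' : Bornology.IsBounded Ω')
    (hsub : closure Ω' ⊆ Metric.ball 0 1) :
    ∃ c₁, 0 < c₁ ∧ ∀ u c, IsSol n Ω Ω' u c → c ≤ c₁ := by
  obtain ⟨x₀, hx₀⟩ := hne
  obtain ⟨ρ, hρ, hball⟩ := Metric.nhds_basis_closedBall.mem_iff.1 (hΩ.mem_nhds hx₀)
  obtain ⟨R, -, hR⟩ := exists_forall_hasC2BoundAt hΩ'.isCompact_closure fun k y hy =>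
    contDiffAt_lorentzFrame (EuclideanSpace.basisFun (Fin n) ℝ) (mem_ball_zero_iff.1 (hsub hy)) k
  refine ⟨(∑ _k : Option (Fin n), 3 / ρ * R ^ 2) + 1, by positivity, fun u c hu => ?_⟩
  obtain ⟨x, hx, hhess⟩ := exists_inner_hessian_le_of_norm_gradient_le (K := 3 / ρ) hρ
    (fun x hx => hu.contDiffAt (subset_closure (hball hx)))
    (fun x hx => (hu.norm_gradient_lt_one (subset_closure (hball hx))).le)
    (by rw [div_mul_cancel₀ _ hρ.ne']; norm_num)
  have hxΩ := hball (Metric.ball_subset_closedBall hx)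
  rw [← hu.sum_inner_lorentzFrame hxΩ]
  refine (Finset.sum_le_sum fun k _ => (hhess _).trans ?_).trans (lt_add_one _).le
  have hk := (hR _ (subset_closure (hu.bijOn_gradient.mapsTo hxΩ)) k).norm_le
  gcongr

end IsSol

namespace IsLegendre

lemma contDiffAt (hut : IsLegendre n Ω Ω' u ut) (hy : y ∈ closure Ω') : ContDiffAt ℝ 4 ut y :=
  (hut.1.contDiffAt hy).of_le (ENat.LEInfty.out)

lemma differentiableAt_gradient (hut : IsLegendre n Ω Ω' u ut) (hy : y ∈ closure Ω') :
    DifferentiableAt ℝ (∇ ut) y :=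
  (contDiffAt_gradient (hut.contDiffAt hy) three_add_one_eq_four.le).differentiableAt (by norm_num)

lemma gradient_gradient (hut : IsLegendre n Ω Ω' u ut) (hx : x ∈ Ω) : ∇ ut (∇ u x) = x :=
  hut.2.2 x hx

lemma mapsTo_gradient (hut : IsLegendre n Ω Ω' u ut) (hu : IsSol n Ω Ω' u c) :
    MapsTo (∇ ut) Ω' Ω := by
  intro y hy
  obtain ⟨x, hx, rfl⟩ := hu.bijOn_gradient.surjOn hy
  rwa [hut.gradient_gradient hx]

lemma continuousOn_gradient (hut : IsLegendre n Ω Ω' u ut) : ContinuousOn (∇ ut) (closure Ω') :=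
  fun _ hy => (hut.differentiableAt_gradient hy).continuousAt.continuousWithinAt

lemma mapsTo_gradient_closure (hut : IsLegendre n Ω Ω' u ut) (hu : IsSol n Ω Ω' u c) :
    MapsTo (∇ ut) (closure Ω') (closure Ω) :=
  (hut.mapsTo_gradient hu).closure_of_continuousOn hut.continuousOn_gradient

lemma gradient_gradient_of_mem_closure (hut : IsLegendre n Ω Ω' u ut) (hu : IsSol n Ω Ω' u c)
    (hy : y ∈ closure Ω') : ∇ u (∇ ut y) = y := by
  have hcomp : ContinuousOn (fun y => ∇ u (∇ ut y)) (closure Ω') :=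
    ContinuousOn.comp (g := ∇ u)
      (fun x hx => (hu.differentiableAt_gradient hx).continuousAt.continuousWithinAt)
      hut.continuousOn_gradient (hut.mapsTo_gradient_closure hu)
  have heq : EqOn (fun y => ∇ u (∇ ut y)) id Ω' := fun y hy => by
    obtain ⟨x, hx, rfl⟩ := hu.bijOn_gradient.surjOn hy
    simp only [hut.gradient_gradient hx, id]
  exact heq.of_subset_closure hcomp continuousOn_id subset_closure subset_rfl hy

lemma mapsTo_gradient_frontier (hut : IsLegendre n Ω Ω' u ut) (hu : IsSol n Ω Ω' u c)
    (hΩ : IsOpen Ω) (hΩ' : IsOpen Ω') : MapsTo (∇ ut) (frontier Ω') (frontier Ω) := by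
  intro y hy
  rw [hΩ'.frontier_eq] at hy
  rw [hΩ.frontier_eq]
  refine ⟨hut.mapsTo_gradient_closure hu hy.1, fun hmem => hy.2 ?_⟩
  rw [← hut.gradient_gradient_of_mem_closure hu hy.1]
  exact hu.bijOn_gradient.mapsTo hmem

lemma hessian_hessian (hut : IsLegendre n Ω Ω' u ut) (hu : IsSol n Ω Ω' u c) (hΩ : IsOpen Ω)
    (hx : x ∈ Ω) (v : EuclideanSpace ℝ (Fin n)) :
    fderiv ℝ (∇ ut) (∇ u x) (fderiv ℝ (∇ u) x v) = v := by
  have hcomp : HasFDerivAt (∇ ut ∘ ∇ u) _ x :=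
    (hut.differentiableAt_gradient
      (subset_closure (hu.bijOn_gradient.mapsTo hx))).hasFDerivAt.comp x
        (hu.differentiableAt_gradient (subset_closure hx)).hasFDerivAt
  have hid : ∇ ut ∘ ∇ u =ᶠ[𝓝 x] id :=
    eventually_of_mem (hΩ.mem_nhds hx) fun z hz => hut.gradient_gradient hz
  exact DFunLike.congr_fun (hcomp.unique ((hasFDerivAt_id x).congr_of_eventuallyEq hid)) v

lemma isInverseFrame (hut : IsLegendre n Ω Ω' u ut) (hu : IsSol n Ω Ω' u c) (hΩ : IsOpen Ω)
    (hx : x ∈ Ω) :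
    IsInverseFrame (lorentzFrame (EuclideanSpace.basisFun (Fin n) ℝ)) ut c (∇ u x)
      fun k => fderiv ℝ (∇ u) x (lorentzFrame (EuclideanSpace.basisFun (Fin n) ℝ) k (∇ u x)) where
  hessian_apply _ := hut.hessian_hessian hu hΩ hx _
  sum_inner := hu.sum_inner_lorentzFrame hx

lemma norm_sq_le (hut : IsLegendre n Ω Ω' u ut) (hu : IsSol n Ω Ω' u c) (hΩ : IsOpen Ω)
    (hy : y ∈ Ω') (v : EuclideanSpace ℝ (Fin n)) :
    ‖v‖ ^ 2 ≤ c * ⟪v, fderiv ℝ (∇ ut) y v⟫ := by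
  obtain ⟨x, hx, rfl⟩ := hu.bijOn_gradient.surjOn hy
  obtain ⟨w, rfl⟩ := hu.hessian_surjective (subset_closure hx) v
  rw [hut.hessian_hessian hu hΩ hx, real_inner_comm]
  exact hu.norm_hessian_apply_sq_le hx w

lemma isSecondBoundarySolution [Nontrivial (EuclideanSpace ℝ (Fin n))]
    (hut : IsLegendre n Ω Ω' u ut) (hu : IsSol n Ω Ω' u c) (hΩ : IsOpen Ω) (hΩ' : IsOpen Ω')
    (hne : Ω.Nonempty) :
    IsSecondBoundarySolution Ω' Ω (lorentzFrame (EuclideanSpace.basisFun (Fin n) ℝ)) ut c where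
  contDiffAt _ hy := hut.contDiffAt hy
  const_pos := hu.const_pos hne
  exists_frame y hy := by
    obtain ⟨x, hx, rfl⟩ := hu.bijOn_gradient.surjOn hy
    exact ⟨_, hut.isInverseFrame hu hΩ hx⟩
  coercive _ hy := hut.norm_sq_le hu hΩ hy
  mapsTo := hut.mapsTo_gradient hu
  mapsTo_frontier := hut.mapsTo_gradient_frontier hu hΩ hΩ'

end IsLegendre

end

/-- Lemma 4.5.  Boundary bound on tangential second derivatives of the
Legendre transform:  `⟨ς, D²ũ(y) ς⟩ ≤ C₃₀` for unit `ς` tangent to `∂Ω̃` at `y`. -/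
theorem statement14 (n : ℕ) (hn : 2 ≤ n) (Ω Ω' : Set (EuclideanSpace ℝ (Fin n)))
    (g h : EuclideanSpace ℝ (Fin n) → ℝ) (θ₁ θ₂ : ℝ)
    (hΩb : Bornology.IsBounded Ω) (hΩ'b : Bornology.IsBounded Ω')
    (hΩ : IsUnifConvexDefFn n Ω g θ₁) (hΩ' : IsUnifConvexDefFn n Ω' h θ₂)
    (hsub : closure Ω' ⊆ Metric.ball (0 : EuclideanSpace ℝ (Fin n)) 1) :
    ∃ C₃₀ : ℝ, 0 < C₃₀ ∧
      ∀ (u ut : EuclideanSpace ℝ (Fin n) → ℝ) (c : ℝ),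
        IsSol n Ω Ω' u c → IsLegendre n Ω Ω' u ut →
        ∀ y ∈ frontier Ω', ∀ ς : EuclideanSpace ℝ (Fin n), ‖ς‖ = 1 →
          ⟪ς, gradient h y⟫ = 0 →
          ⟪ς, fderiv ℝ (gradient ut) y ς⟫ ≤ C₃₀ := by
  have : Nonempty (Fin n) := ⟨⟨0, by omega⟩⟩
  have hg := hΩ.isConvexDefiningFunction hΩb
  have hh := hΩ'.isConvexDefiningFunction hΩ'b
  obtain rfl | hne' := Ω'.eq_empty_or_nonempty
  · exact ⟨1, one_pos, fun _ _ _ _ _ y hy => by simp at hy⟩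
  obtain rfl | hne := Ω.eq_empty_or_nonempty
  · refine ⟨1, one_pos, fun u _ c hu => absurd (hu.bijOn_gradient.image_eq) ?_⟩
    simpa using hne'.ne_empty.symm
  obtain ⟨c₀, hc₀, hlower⟩ := LorentzDual.IsSecondBoundarySolution.exists_le_const
    (r := LorentzDual.lorentzFrame (EuclideanSpace.basisFun (Fin n) ℝ)) hh.isOpen hne' hΩb
  obtain ⟨c₁, hc₁, hupper⟩ := IsSol.exists_const_le hg.isOpen hne hΩ'b hsub
  obtain ⟨D, hD, hbound⟩ :=
    LorentzDual.IsSecondBoundarySolution.exists_inner_hessian_le hh hg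
      (fun k y hy => LorentzDual.contDiffAt_lorentzFrame (EuclideanSpace.basisFun (Fin n) ℝ)
        (mem_ball_zero_iff.1 (hsub hy)) k) hc₀ hc₁
  refine ⟨D, hD, fun u ut c hu hut y hy ς hς htangent => ?_⟩
  have hs := hut.isSecondBoundarySolution hu hg.isOpen hh.isOpen hne
  exact hbound ut c hs ⟨hlower ut c hs, hupper u c hu⟩ (y, ς) ⟨hy, hς, htangent⟩
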